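/- arXiv:2005.09154 — 5 statements merged into one kernel-verified Lean document; each statement's English description precedes it below -/
import Mathlib

section
/- Let α ∈ (1,2). For every m ∈ ℤ₊ and all j₁, j₂, j₃ ∈ ℤ with |j₁ − j₃| > 1, one has ‖ ψ_{j₁}(η₁) ψ_{j₂}(η₂) ψ_{j₃}(η₃) / (|η₁|^{1−α} − |η₃|^{1−α})^m ‖_{S^∞(ℝ³)} ≲ 2^{m(α−1) min{j₁, j₃}}, with implicit constant depending only on α and m. -/
/-!
Put `β = α - 1`. The `S^∞` norm is invariant under dilations of each variable, so all three
frequencies can be rescaled to `1`; this turns the denominator into `2 ^ (-β j₁)` times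
`|x| ^ (-β) - t |z| ^ (-β)` with `t = 2 ^ (-β (j₃ - j₁))`. If `j₃ - j₁ ≥ 2` (the other case is its
mirror image), the negative binomial series
`(|x| ^ (-β) - t |z| ^ (-β)) ^ (-m) = ∑ₙ (n+m-1 choose m-1) tⁿ |x| ^ (β(m+n)) |z| ^ (-βn)`
converges on the support and writes the symbol as a sum of products of one-variable symbols.

Two integrations by parts bound the inverse Fourier transform of a smooth cutoff of `|x| ^ s` by
`(1 + |s|) ^ 2 sup |x| ^ s` times an integrable kernel. The `n`-th term therefore has `S^∞` norm at
most a polynomial in `n` times `(t (b / a) ^ β) ^ n`, where `a ≤ |x| ≤ b` contains the rescaled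
supports. For a cutoff equal to `1` up to `r` and supported up to `R < 2 r`, `a = r / 2` and
`b = R`, so this ratio is at most `(R / (2 r)) ^ β < 1`, uniformly in the frequencies.
-/

open MeasureTheory Real
open scoped ENNReal

noncomputable section

/-- Inverse Fourier transform on `ℝ³` of a three-variable symbol. -/
def finv3 (κ : ℝ → ℝ → ℝ → ℂ) (y : ℝ × ℝ × ℝ) : ℂ :=
  ∫ η : ℝ × ℝ × ℝ,
    κ η.1 η.2.1 η.2.2
      * Complex.exp (Complex.I * (η.1 * y.1 + η.2.1 * y.2.1 + η.2.2 * y.2.2 : ℝ))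

/-- The `S^∞(ℝ³)` norm `‖F^{-1}κ‖_{L¹(ℝ³)}`. -/
def sInf3Norm (κ : ℝ → ℝ → ℝ → ℂ) : ℝ := (eLpNorm (finv3 κ) 1 volume).toReal

/-- Littlewood–Paley symbol `ψ_k(ξ) = ψ(ξ/2^k) - ψ(ξ/2^{k-1})`. -/
def lpSymb (ψ : ℝ → ℝ) (k : ℤ) (ξ : ℝ) : ℝ :=
  ψ (ξ / 2 ^ k) - ψ (ξ / 2 ^ (k - 1))


/-! ### The inverse Fourier transform in one variable -/

/-- Inverse Fourier transform on `ℝ` of a one-variable symbol, with the sign and normalisation of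
`finv3`. -/
def finv1 (f : ℝ → ℂ) (y : ℝ) : ℂ := ∫ x : ℝ, f x * Complex.exp (Complex.I * (x * y : ℝ))

lemma finv1_eq_fourier (f : ℝ → ℂ) (y : ℝ) :
    finv1 f y = FourierTransform.fourier f (-y / (2 * π)) := by
  rw [Real.fourier_eq', finv1]
  congr with x
  have hphase : -2 * π * inner ℝ x (-y / (2 * π)) = x * y := by
    simp only [RCLike.inner_apply, conj_trivial]
    field_simp
  rw [hphase, smul_eq_mul, mul_comm, mul_comm Complex.I]

lemma norm_finv1_le (f : ℝ → ℂ) (y : ℝ) : ‖finv1 f y‖ ≤ ∫ x, ‖f x‖ := by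
  rw [finv1_eq_fourier]
  exact VectorFourier.norm_fourierIntegral_le_integral_norm _ _ _ _ _

/-- The Sobolev class `W^{2,1}(ℝ)`, restricted to functions that are twice differentiable in the
classical sense. -/
structure MemW21 (f : ℝ → ℂ) : Prop where
  differentiable : Differentiable ℝ f
  differentiable_deriv : Differentiable ℝ (deriv f)
  integrable : Integrable f
  integrable_deriv : Integrable (deriv f)
  integrable_deriv_deriv : Integrable (deriv (deriv f))

/-- The size `‖f‖_{L¹} + ‖f''‖_{L¹}` of a symbol in `W^{2,1}(ℝ)`. -/
def w21Norm (f : ℝ → ℂ) : ℝ := (∫ x, ‖f x‖) + ∫ x, ‖deriv (deriv f) x‖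

lemma w21Norm_nonneg (f : ℝ → ℂ) : 0 ≤ w21Norm f := by unfold w21Norm; positivity

lemma integral_norm_le_w21Norm (f : ℝ → ℂ) : ∫ x, ‖f x‖ ≤ w21Norm f :=
  le_add_of_nonneg_right (by positivity)

lemma memW21_of_hasCompactSupport {f : ℝ → ℂ} (hf : ContDiff ℝ 2 f) (hc : HasCompactSupport f) :
    MemW21 f := by
  have hf' : ContDiff ℝ 1 (deriv f) := (contDiff_succ_iff_deriv.mp hf).2.2
  exact
    { differentiable := hf.differentiable two_ne_zero
      differentiable_deriv := hf'.differentiable one_ne_zero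
      integrable := hf.continuous.integrable_of_hasCompactSupport hc
      integrable_deriv := hf'.continuous.integrable_of_hasCompactSupport hc.deriv
      integrable_deriv_deriv :=
        (hf'.continuous_deriv le_rfl).integrable_of_hasCompactSupport hc.deriv.deriv }

lemma finv1_deriv {f : ℝ → ℂ} (hf : Differentiable ℝ f) (hi : Integrable f)
    (hi' : Integrable (deriv f)) (y : ℝ) : finv1 (deriv f) y = -(Complex.I * y) * finv1 f y := by
  rw [finv1_eq_fourier, finv1_eq_fourier, Real.fourier_deriv hi hf hi']
  push_cast [smul_eq_mul]
  field_simp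

protected lemma MemW21.norm_finv1_le {f : ℝ → ℂ} (hf : MemW21 f) (y : ℝ) :
    ‖finv1 f y‖ ≤ w21Norm f * (1 + y ^ 2)⁻¹ := by
  have hdd : ‖finv1 (deriv (deriv f)) y‖ = y ^ 2 * ‖finv1 f y‖ := by
    rw [finv1_deriv hf.differentiable_deriv hf.integrable_deriv hf.integrable_deriv_deriv,
      finv1_deriv hf.differentiable hf.integrable hf.integrable_deriv]
    simp only [norm_mul, norm_neg, Complex.norm_I, Complex.norm_real, one_mul, Real.norm_eq_abs,
      ← mul_assoc, abs_mul_abs_self, sq]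
  rw [← div_eq_mul_inv, le_div_iff₀ (by positivity), mul_comm, one_add_mul, ← hdd]
  exact add_le_add (norm_finv1_le f y) (norm_finv1_le _ y)

/-! ### The `S^∞` norm in three variables -/

lemma finv3_mul (f g h : ℝ → ℂ) (y : ℝ × ℝ × ℝ) :
    finv3 (fun x₁ x₂ x₃ => f x₁ * g x₂ * h x₃) y =
      finv1 f y.1 * (finv1 g y.2.1 * finv1 h y.2.2) := by
  simp only [finv1, finv3]
  rw [← integral_prod_mul, ← integral_prod_mul]
  congr with η
  push_cast
  rw [mul_add, mul_add, Complex.exp_add, Complex.exp_add]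
  ring

lemma finv3_const_mul (c : ℂ) (κ : ℝ → ℝ → ℝ → ℂ) :
    finv3 (fun x₁ x₂ x₃ => c * κ x₁ x₂ x₃) = c • finv3 κ := by
  ext y
  simp only [finv3, Pi.smul_apply, smul_eq_mul, mul_assoc, integral_const_mul]

lemma hasSum_finv3 {ι : Type*} [Countable ι] {κ : ι → ℝ → ℝ → ℝ → ℂ} {κ' : ℝ → ℝ → ℝ → ℂ}
    (hint : ∀ i, Integrable fun η : ℝ × ℝ × ℝ => κ i η.1 η.2.1 η.2.2)
    (hsum : Summable fun i => ∫ η : ℝ × ℝ × ℝ, ‖κ i η.1 η.2.1 η.2.2‖)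
    (hκ : ∀ x₁ x₂ x₃, HasSum (fun i => κ i x₁ x₂ x₃) (κ' x₁ x₂ x₃)) (y : ℝ × ℝ × ℝ) :
    HasSum (fun i => finv3 (κ i) y) (finv3 κ' y) := by
  have hexp : Continuous fun η : ℝ × ℝ × ℝ =>
      Complex.exp (Complex.I * (η.1 * y.1 + η.2.1 * y.2.1 + η.2.2 * y.2.2 : ℝ)) := by fun_prop
  have h := hasSum_integral_of_summable_integral_norm
    (fun i => (hint i).mul_bdd (c := 1) hexp.aestronglyMeasurable
      (.of_forall fun η => (Complex.norm_exp_I_mul_ofReal _).le))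
    (by simpa only [norm_mul, Complex.norm_exp_I_mul_ofReal, mul_one] using hsum)
  rw [finv3]
  simpa only [finv3, ((hκ _ _ _).mul_right _).tsum_eq] using h

lemma sInf3Norm_const_mul (c : ℂ) (κ : ℝ → ℝ → ℝ → ℂ) :
    sInf3Norm (fun x₁ x₂ x₃ => c * κ x₁ x₂ x₃) = ‖c‖ * sInf3Norm κ := by
  rw [sInf3Norm, finv3_const_mul, eLpNorm_const_smul, ENNReal.toReal_mul, toReal_enorm, sInf3Norm]

/-- Precomposition with a change of variables `e` of the frequency space acts on the Fourier side
through the contragredient change of variables `e'`, and the two Jacobians cancel in `L¹`. -/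
lemma sInf3Norm_comp {e e' : ℝ × ℝ × ℝ ≃ᵐ ℝ × ℝ × ℝ} {c : ℝ} (hc : 0 < c)
    (he : Measure.map e volume = ENNReal.ofReal c • volume)
    (he' : Measure.map e' volume = ENNReal.ofReal c⁻¹ • volume)
    (hdual : ∀ η y, (e η).1 * (e' y).1 + (e η).2.1 * (e' y).2.1 + (e η).2.2 * (e' y).2.2 =
      η.1 * y.1 + η.2.1 * y.2.1 + η.2.2 * y.2.2) (κ : ℝ → ℝ → ℝ → ℂ) :
    sInf3Norm (fun x₁ x₂ x₃ => κ (e (x₁, x₂, x₃)).1 (e (x₁, x₂, x₃)).2.1 (e (x₁, x₂, x₃)).2.2) =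
      sInf3Norm κ := by
  have hfinv : finv3 (fun x₁ x₂ x₃ =>
      κ (e (x₁, x₂, x₃)).1 (e (x₁, x₂, x₃)).2.1 (e (x₁, x₂, x₃)).2.2) =
      c • (finv3 κ ∘ e') := by
    ext y
    have hmap := integral_map_equiv (μ := volume) e fun ξ : ℝ × ℝ × ℝ => κ ξ.1 ξ.2.1 ξ.2.2 *
      Complex.exp (Complex.I *
        (ξ.1 * (e' y).1 + ξ.2.1 * (e' y).2.1 + ξ.2.2 * (e' y).2.2 : ℝ))
    rw [he, integral_smul_measure, ENNReal.toReal_ofReal hc.le] at hmap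
    simp only [hdual] at hmap
    exact hmap.symm
  rw [sInf3Norm, hfinv, eLpNorm_const_smul, ← e'.measurableEmbedding.eLpNorm_map_measure, he',
    eLpNorm_one_smul_measure, ← mul_assoc, Real.enorm_of_nonneg hc.le,
    ← ENNReal.ofReal_mul hc.le, mul_inv_cancel₀ hc.ne', ENNReal.ofReal_one, one_mul, sInf3Norm]

lemma map_volume_prodCongr_mulLeft₀ {a b c : ℝ} (ha : a ≠ 0) (hb : b ≠ 0) (hc : c ≠ 0) :
    Measure.map ((MeasurableEquiv.mulLeft₀ a ha).prodCongr
        ((MeasurableEquiv.mulLeft₀ b hb).prodCongr (MeasurableEquiv.mulLeft₀ c hc))) volume =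
      ENNReal.ofReal |(a * b * c)⁻¹| • volume := by
  simp only [Measure.volume_eq_prod]
  change Measure.map (Prod.map (a * ·) (Prod.map (b * ·) (c * ·))) _ = _
  rw [← Measure.map_prod_map _ _ (by fun_prop) (by fun_prop),
    ← Measure.map_prod_map _ _ (by fun_prop) (by fun_prop), Real.map_volume_mul_left ha,
    Real.map_volume_mul_left hb, Real.map_volume_mul_left hc]
  simp only [Measure.prod_smul_left, Measure.prod_smul_right, smul_smul, mul_inv, abs_mul]
  rw [ENNReal.ofReal_mul (by positivity), ENNReal.ofReal_mul (by positivity)]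
  congr 1
  ring

lemma sInf3Norm_comp_mul {a b c : ℝ} (ha : a ≠ 0) (hb : b ≠ 0) (hc : c ≠ 0)
    (κ : ℝ → ℝ → ℝ → ℂ) :
    sInf3Norm (fun x₁ x₂ x₃ => κ (a * x₁) (b * x₂) (c * x₃)) = sInf3Norm κ := by
  refine sInf3Norm_comp (abs_pos.mpr (inv_ne_zero (mul_ne_zero (mul_ne_zero ha hb) hc)))
    (map_volume_prodCongr_mulLeft₀ ha hb hc)
    ((map_volume_prodCongr_mulLeft₀ (inv_ne_zero ha) (inv_ne_zero hb) (inv_ne_zero hc)).trans ?_)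
    (fun η y => ?_) κ
  · simp only [← mul_inv, abs_inv]
  · change a * η.1 * (a⁻¹ * y.1) + b * η.2.1 * (b⁻¹ * y.2.1) + c * η.2.2 * (c⁻¹ * y.2.2) = _
    field_simp

/-- The measurable involution `(x₁, x₂, x₃) ↦ (x₃, x₂, x₁)`, which exchanges the two variables of
the denominator. -/
def prodReverse : ℝ × ℝ × ℝ ≃ᵐ ℝ × ℝ × ℝ :=
  MeasurableEquiv.prodComm.trans
    ((MeasurableEquiv.prodComm.prodCongr (.refl ℝ)).trans MeasurableEquiv.prodAssoc)

lemma measurePreserving_prodReverse : MeasurePreserving prodReverse :=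
  (measurePreserving_prodAssoc volume volume volume).comp
    ((Measure.measurePreserving_swap.prod (.id volume)).comp Measure.measurePreserving_swap)

lemma sInf3Norm_reverse (κ : ℝ → ℝ → ℝ → ℂ) :
    sInf3Norm (fun x₁ x₂ x₃ => κ x₃ x₂ x₁) = sInf3Norm κ :=
  sInf3Norm_comp (e := prodReverse) (e' := prodReverse) one_pos
    (by rw [measurePreserving_prodReverse.map_eq, ENNReal.ofReal_one, one_smul])
    (by rw [measurePreserving_prodReverse.map_eq, inv_one, ENNReal.ofReal_one, one_smul])
    (fun η y => by
      change η.2.2 * y.2.2 + η.2.1 * y.2.1 + η.1 * y.1 = _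
      ring) κ

lemma integrable_prod_inv_one_add_sq : Integrable fun y : ℝ × ℝ × ℝ =>
    (1 + y.1 ^ 2)⁻¹ * ((1 + y.2.1 ^ 2)⁻¹ * (1 + y.2.2 ^ 2)⁻¹) :=
  integrable_inv_one_add_sq.mul_prod (integrable_inv_one_add_sq.mul_prod integrable_inv_one_add_sq)

lemma integral_prod_inv_one_add_sq : ∫ y : ℝ × ℝ × ℝ,
    (1 + y.1 ^ 2)⁻¹ * ((1 + y.2.1 ^ 2)⁻¹ * (1 + y.2.2 ^ 2)⁻¹) = π ^ 3 := by
  simp only [Measure.volume_eq_prod]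
  rw [integral_prod_mul (fun x : ℝ => (1 + x ^ 2)⁻¹)
      fun y : ℝ × ℝ => (1 + y.1 ^ 2)⁻¹ * (1 + y.2 ^ 2)⁻¹,
    integral_prod_mul (fun x : ℝ => (1 + x ^ 2)⁻¹) fun x : ℝ => (1 + x ^ 2)⁻¹,
    integral_univ_inv_one_add_sq]
  ring

lemma sInf3Norm_le_of_norm_finv3_le {κ : ℝ → ℝ → ℝ → ℂ} {K : ℝ}
    (h : ∀ y, ‖finv3 κ y‖ ≤ K * ((1 + y.1 ^ 2)⁻¹ * ((1 + y.2.1 ^ 2)⁻¹ * (1 + y.2.2 ^ 2)⁻¹))) :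
    sInf3Norm κ ≤ π ^ 3 * K := by
  have hint := integrable_prod_inv_one_add_sq.const_mul K
  have hval := integral_prod_inv_one_add_sq
  have hnn := fun y => (norm_nonneg _).trans (h y)
  rw [mul_comm, ← hval, ← integral_const_mul]
  refine ENNReal.toReal_le_of_le_ofReal (integral_nonneg hnn) ((eLpNorm_mono_real h).trans_eq ?_)
  rw [eLpNorm_one_eq_lintegral_enorm, ← ofReal_integral_norm_eq_lintegral_enorm hint]
  simp only [Real.norm_of_nonneg (hnn _)]

lemma sInf3Norm_le_of_hasSum {ι : Type*} [Countable ι] {c : ι → ℂ} {f g h : ι → ℝ → ℂ} {u : ι → ℝ}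
    {κ : ℝ → ℝ → ℝ → ℂ} (hf : ∀ i, MemW21 (f i)) (hg : ∀ i, MemW21 (g i)) (hh : ∀ i, MemW21 (h i))
    (hle : ∀ i, ‖c i‖ * (w21Norm (f i) * (w21Norm (g i) * w21Norm (h i))) ≤ u i) (hu : Summable u)
    (hκ : ∀ x₁ x₂ x₃, HasSum (fun i => c i * (f i x₁ * g i x₂ * h i x₃)) (κ x₁ x₂ x₃)) :
    sInf3Norm κ ≤ π ^ 3 * ∑' i, u i := by
  have hint : ∀ i, Integrable fun η : ℝ × ℝ × ℝ => c i * (f i η.1 * g i η.2.1 * h i η.2.2) :=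
    fun i => by
      simpa only [mul_assoc, Measure.volume_eq_prod] using ((hf i).integrable.mul_prod
        ((hg i).integrable.mul_prod (hh i).integrable)).const_mul (c i)
  have hmass : ∀ i, ∫ η : ℝ × ℝ × ℝ, ‖c i * (f i η.1 * g i η.2.1 * h i η.2.2)‖ ≤ u i := fun i => by
    simp only [norm_mul, mul_assoc, integral_const_mul, Measure.volume_eq_prod]
    rw [integral_prod_mul (fun x => ‖f i x‖) fun y : ℝ × ℝ => ‖g i y.1‖ * ‖h i y.2‖,
      integral_prod_mul (fun x => ‖g i x‖) fun x => ‖h i x‖]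
    refine le_trans ?_ (hle i)
    have := w21Norm_nonneg (f i)
    have := w21Norm_nonneg (g i)
    gcongr <;> exact integral_norm_le_w21Norm _
  have hdecay : ∀ i y, ‖finv3 (fun x₁ x₂ x₃ => c i * (f i x₁ * g i x₂ * h i x₃)) y‖ ≤
      u i * ((1 + y.1 ^ 2)⁻¹ * ((1 + y.2.1 ^ 2)⁻¹ * (1 + y.2.2 ^ 2)⁻¹)) := fun i y => by
    rw [finv3_const_mul, Pi.smul_apply, finv3_mul, smul_eq_mul, norm_mul, norm_mul, norm_mul]
    have := w21Norm_nonneg (f i)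
    have := w21Norm_nonneg (g i)
    calc _ ≤ ‖c i‖ * (w21Norm (f i) * (1 + y.1 ^ 2)⁻¹ *
          (w21Norm (g i) * (1 + y.2.1 ^ 2)⁻¹ * (w21Norm (h i) * (1 + y.2.2 ^ 2)⁻¹))) := by
          gcongr
          exacts [(hf i).norm_finv1_le _, (hg i).norm_finv1_le _, (hh i).norm_finv1_le _]
      _ = ‖c i‖ * (w21Norm (f i) * (w21Norm (g i) * w21Norm (h i))) *
          ((1 + y.1 ^ 2)⁻¹ * ((1 + y.2.1 ^ 2)⁻¹ * (1 + y.2.2 ^ 2)⁻¹)) := by ring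
      _ ≤ _ := by gcongr; exact hle i
  have hsum := hasSum_finv3 hint (.of_nonneg_of_le (fun i => by positivity) hmass hu) hκ
  refine sInf3Norm_le_of_norm_finv3_le fun y => ?_
  rw [← (hsum y).tsum_eq]
  exact tsum_of_norm_bounded (hu.hasSum.mul_right _) fun i => hdecay i y

/-! ### Powers of `|x|` cut off to an annulus -/

/-- A `C²` symbol of one variable supported in the annulus `a ≤ |x| ≤ b`. -/
structure IsAnnularSymbol (a b : ℝ) (φ : ℝ → ℂ) : Prop where
  contDiff : ContDiff ℝ 2 φ
  abs_mem_Icc : ∀ x, φ x ≠ 0 → |x| ∈ Set.Icc a b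

/-- The power `|x|^s` cut off by the symbol `φ`; only used when `φ` vanishes near the origin, so
that the value of `0 ^ s` is immaterial. -/
def cutoffRpow (s : ℝ) (φ : ℝ → ℂ) (x : ℝ) : ℂ := |x| ^ s • φ x

lemma tsupport_cutoffRpow_subset (s : ℝ) (φ : ℝ → ℂ) : tsupport (cutoffRpow s φ) ⊆ tsupport φ :=
  tsupport_smul_subset_right (fun x : ℝ => |x| ^ s) φ

lemma hasDerivAt_abs_rpow_of_ne (s : ℝ) {x : ℝ} (hx : x ≠ 0) :
    HasDerivAt (fun x : ℝ => |x| ^ s) (|x| ^ s * (s / x)) x := by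
  have hvalue : |x| ^ s * (s / x) = SignType.sign x * s * |x| ^ (s - 1) := by
    rw [Real.rpow_sub_one (abs_ne_zero.mpr hx), ← sign_mul_self x]
    have hsign : (SignType.sign x : ℝ) ≠ 0 :=
      left_ne_zero_of_mul ((sign_mul_self x).trans_ne (abs_ne_zero.mpr hx))
    field_simp
  rw [hvalue]
  exact (hasDerivAt_abs hx).rpow_const (.inl (abs_ne_zero.mpr hx))

lemma hasDerivAt_cutoffRpow (s : ℝ) {φ : ℝ → ℂ} {φ' : ℂ} {x : ℝ} (hx : x ≠ 0)
    (hφ : HasDerivAt φ φ' x) :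
    HasDerivAt (cutoffRpow s φ) (|x| ^ s • (φ' + (s / x) • φ x)) x := by
  rw [smul_add, smul_smul]
  exact (hasDerivAt_abs_rpow_of_ne s hx).smul hφ

lemma deriv_deriv_cutoffRpow (s : ℝ) {φ : ℝ → ℂ} (hφ : ContDiff ℝ 2 φ) {x : ℝ} (hx : x ≠ 0) :
    deriv (deriv (cutoffRpow s φ)) x = |x| ^ s •
      (deriv (deriv φ) x + (2 * s / x) • deriv φ x + (s * (s - 1) / x ^ 2) • φ x) := by
  have hφ₁ : ∀ y, HasDerivAt φ (deriv φ y) y := fun y =>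
    (hφ.differentiable two_ne_zero y).hasDerivAt
  have hφ₂ : HasDerivAt (deriv φ) (deriv (deriv φ) x) x :=
    ((contDiff_succ_iff_deriv.mp hφ).2.2.differentiable one_ne_zero x).hasDerivAt
  have hderiv : deriv (cutoffRpow s φ) =ᶠ[nhds x]
      cutoffRpow s (fun y => deriv φ y + (s / y) • φ y) := by
    filter_upwards [isOpen_ne.mem_nhds hx] with y hy
    exact (hasDerivAt_cutoffRpow s hy (hφ₁ y)).deriv
  have hdiv : HasDerivAt (fun y : ℝ => s / y) (-s / x ^ 2) x := by
    simpa only [div_eq_mul_inv, neg_mul, mul_neg] using (hasDerivAt_inv hx).const_mul s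
  rw [hderiv.deriv_eq,
    (hasDerivAt_cutoffRpow s hx (hφ₂.fun_add (hdiv.fun_smul (hφ₁ x)))).deriv]
  simp only [Complex.real_smul]
  have hx' : (x : ℂ) ≠ 0 := by exact_mod_cast hx
  push_cast
  field_simp
  ring

namespace IsAnnularSymbol

variable {a b : ℝ} {φ : ℝ → ℂ}

lemma abs_mem_Icc_of_mem_tsupport (hφ : IsAnnularSymbol a b φ) {x : ℝ} (hx : x ∈ tsupport φ) :
    |x| ∈ Set.Icc a b :=
  closure_minimal hφ.abs_mem_Icc (isClosed_Icc.preimage continuous_abs) hx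

lemma hasCompactSupport (hφ : IsAnnularSymbol a b φ) : HasCompactSupport φ :=
  (isCompact_closedBall (0 : ℝ) b).of_isClosed_subset (isClosed_tsupport φ) fun x hx => by
    simpa using (hφ.abs_mem_Icc_of_mem_tsupport hx).2

lemma memW21 (hφ : IsAnnularSymbol a b φ) : MemW21 φ :=
  memW21_of_hasCompactSupport hφ.contDiff hφ.hasCompactSupport

lemma ne_zero_of_mem_tsupport (ha : 0 < a) (hφ : IsAnnularSymbol a b φ) {x : ℝ}
    (hx : x ∈ tsupport φ) : x ≠ 0 :=
  abs_pos.mp (ha.trans_le (hφ.abs_mem_Icc_of_mem_tsupport hx).1)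

protected lemma cutoffRpow (ha : 0 < a) (hφ : IsAnnularSymbol a b φ) (s : ℝ) :
    IsAnnularSymbol a b (cutoffRpow s φ) where
  contDiff := contDiff_iff_contDiffAt.mpr fun x => by
    by_cases hx : x ∈ tsupport φ
    · have hx₀ := hφ.ne_zero_of_mem_tsupport ha hx
      exact ((contDiffAt_abs hx₀).rpow_const_of_ne (abs_ne_zero.mpr hx₀)).smul
        hφ.contDiff.contDiffAt
    · exact contDiffAt_const.congr_of_eventuallyEq (notMem_tsupport_iff_eventuallyEq.mp
        fun h => hx (tsupport_cutoffRpow_subset s φ h))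
  abs_mem_Icc x hx := hφ.abs_mem_Icc x (right_ne_zero_of_smul hx)

lemma norm_deriv_deriv_cutoffRpow_le (ha : 0 < a) (hφ : IsAnnularSymbol a b φ) {s M : ℝ}
    (hM₀ : 0 ≤ M) (hM : ∀ x ∈ Set.Icc a b, x ^ s ≤ M) (x : ℝ) :
    ‖deriv (deriv (cutoffRpow s φ)) x‖ ≤ M * (1 + |s|) ^ 2 *
      (‖deriv (deriv φ) x‖ + a⁻¹ * ‖deriv φ x‖ + (a ^ 2)⁻¹ * ‖φ x‖) := by
  by_cases hx : x ∈ tsupport φ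
  swap
  · have hzero := notMem_tsupport_iff_eventuallyEq.mp
      fun h => hx (tsupport_cutoffRpow_subset s φ h)
    rw [hzero.deriv.deriv_eq]
    simp only [Pi.zero_def, deriv_const', norm_zero]
    positivity
  have hxa := hφ.abs_mem_Icc_of_mem_tsupport hx
  have hfirst : ‖2 * s / x‖ ≤ (1 + |s|) ^ 2 * a⁻¹ := by
    rw [norm_div, div_eq_mul_inv]
    simp only [Real.norm_eq_abs, abs_mul, abs_two]
    gcongr
    · nlinarith [sq_nonneg |s|]
    · exact hxa.1
  have hzeroth : ‖s * (s - 1) / x ^ 2‖ ≤ (1 + |s|) ^ 2 * (a ^ 2)⁻¹ := by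
    rw [norm_div, div_eq_mul_inv]
    simp only [Real.norm_eq_abs, abs_mul, abs_pow]
    gcongr
    · nlinarith [abs_nonneg s, abs_sub s 1, abs_one (α := ℝ)]
    · exact hxa.1
  rw [deriv_deriv_cutoffRpow s hφ.contDiff (hφ.ne_zero_of_mem_tsupport ha hx), norm_smul,
    Real.norm_of_nonneg (by positivity), mul_assoc]
  gcongr
  · exact hM _ hxa
  · calc _ ≤ ‖deriv (deriv φ) x‖ + ‖2 * s / x‖ * ‖deriv φ x‖ + ‖s * (s - 1) / x ^ 2‖ * ‖φ x‖ := by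
          rw [← norm_smul, ← norm_smul]
          exact norm_add₃_le
      _ ≤ (1 + |s|) ^ 2 * ‖deriv (deriv φ) x‖ + (1 + |s|) ^ 2 * a⁻¹ * ‖deriv φ x‖ +
          (1 + |s|) ^ 2 * (a ^ 2)⁻¹ * ‖φ x‖ := by
          gcongr
          exact le_mul_of_one_le_left (norm_nonneg _)
            (one_le_pow₀ (le_add_of_nonneg_right (abs_nonneg s)))
      _ = _ := by ring

lemma norm_cutoffRpow_le (hφ : IsAnnularSymbol a b φ) {s M : ℝ}
    (hM : ∀ x ∈ Set.Icc a b, x ^ s ≤ M) (x : ℝ) : ‖cutoffRpow s φ x‖ ≤ M * ‖φ x‖ := by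
  rw [cutoffRpow, norm_smul, Real.norm_of_nonneg (by positivity)]
  by_cases hx : φ x = 0
  · rw [hx, norm_zero, mul_zero, mul_zero]
  · exact mul_le_mul_of_nonneg_right (hM _ (hφ.abs_mem_Icc x hx)) (norm_nonneg _)

lemma exists_w21Norm_cutoffRpow_le (ha : 0 < a) (hφ : IsAnnularSymbol a b φ) :
    ∃ C, 0 ≤ C ∧ ∀ s M, 0 ≤ M → (∀ x ∈ Set.Icc a b, x ^ s ≤ M) →
      w21Norm (cutoffRpow s φ) ≤ C * ((1 + |s|) ^ 2 * M) := by
  have hW := hφ.memW21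
  have hint := (hW.integrable_deriv_deriv.norm.add (hW.integrable_deriv.norm.const_mul a⁻¹)).add
    (hW.integrable.norm.const_mul (a ^ 2)⁻¹)
  refine ⟨(∫ x, ‖φ x‖) +
    ∫ x, (‖deriv (deriv φ) x‖ + a⁻¹ * ‖deriv φ x‖ + (a ^ 2)⁻¹ * ‖φ x‖), by positivity,
    fun s M hM₀ hM => ?_⟩
  have hWs := (hφ.cutoffRpow ha s).memW21
  have hmass : ∫ x, ‖cutoffRpow s φ x‖ ≤ M * ∫ x, ‖φ x‖ := by
    rw [← integral_const_mul]
    exact integral_mono hWs.integrable.norm (hW.integrable.norm.const_mul M)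
      (hφ.norm_cutoffRpow_le hM)
  have hderiv := integral_mono hWs.integrable_deriv_deriv.norm
    (hint.const_mul (M * (1 + |s|) ^ 2)) (hφ.norm_deriv_deriv_cutoffRpow_le ha hM₀ hM)
  simp only [Pi.add_apply, integral_const_mul] at hderiv
  have hgrowth : M * ∫ x, ‖φ x‖ ≤ M * (1 + |s|) ^ 2 * ∫ x, ‖φ x‖ := by
    gcongr
    exact le_mul_of_one_le_right hM₀ (one_le_pow₀ (le_add_of_nonneg_right (abs_nonneg s)))
  rw [w21Norm]
  linarith

end IsAnnularSymbol

/-! ### The negative binomial expansion -/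

lemma hasSum_inv_sub_pow {𝕜 : Type*} [NormedField 𝕜] [CompleteSpace 𝕜] {A B : 𝕜}
    (h : ‖B‖ < ‖A‖) (k : ℕ) :
    HasSum (fun n => ((n + k).choose k : 𝕜) * ((A⁻¹) ^ (k + 1 + n) * B ^ n))
      ((A - B) ^ (k + 1))⁻¹ := by
  have hA : A ≠ 0 := norm_pos_iff.mp ((norm_nonneg B).trans_lt h)
  have hr : ‖B / A‖ < 1 := by rwa [norm_div, div_lt_one ((norm_nonneg B).trans_lt h)]
  have hvalue : ((A - B) ^ (k + 1))⁻¹ = A⁻¹ ^ (k + 1) * (1 / (1 - B / A) ^ (k + 1)) := by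
    rw [one_div, ← inv_pow, ← inv_pow, ← mul_pow, ← mul_inv, mul_sub, mul_one,
      mul_div_cancel₀ _ hA]
  rw [hvalue]
  refine ((hasSum_choose_mul_geometric_of_norm_lt_one k hr).mul_left (A⁻¹ ^ (k + 1))).congr_fun
    fun n => ?_
  rw [div_eq_inv_mul, mul_pow, pow_add]
  ring

/-- The growth in `n` of the `n`-th term of the separated expansion, apart from its geometric
factor. -/
def expansionWeight (β : ℝ) (k n : ℕ) : ℝ :=
  (n + k).choose k * ((1 + β * ↑(k + 1 + n)) ^ 2 * (1 + β * n) ^ 2)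

lemma expansionWeight_le {β : ℝ} (hβ : 0 ≤ β) (k n : ℕ) :
    expansionWeight β k n ≤ (1 + β) ^ 4 * ((n + (k + 1) : ℕ) : ℝ) ^ (k + 4) := by
  have hN : (1 : ℝ) ≤ ((n + (k + 1) : ℕ) : ℝ) := by exact_mod_cast Nat.succ_le_succ (Nat.zero_le _)
  have hchoose : ((n + k).choose k : ℝ) ≤ ((n + (k + 1) : ℕ) : ℝ) ^ k := by
    exact_mod_cast (Nat.choose_le_pow _ _).trans (Nat.pow_le_pow_left (by lia) k)
  have hlinear : ∀ l : ℕ, l ≤ n + (k + 1) → 1 + β * l ≤ (1 + β) * ((n + (k + 1) : ℕ) : ℝ) :=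
    fun l hl => by
      rw [add_mul, one_mul]
      gcongr
  calc expansionWeight β k n
      ≤ ((n + (k + 1) : ℕ) : ℝ) ^ k * (((1 + β) * ((n + (k + 1) : ℕ) : ℝ)) ^ 2 *
        ((1 + β) * ((n + (k + 1) : ℕ) : ℝ)) ^ 2) := by
        unfold expansionWeight
        gcongr
        · exact hlinear _ (by lia)
        · exact hlinear _ (by lia)
    _ = _ := by ring

lemma expansionWeight_nonneg {β : ℝ} (hβ : 0 ≤ β) (k n : ℕ) : 0 ≤ expansionWeight β k n := by
  unfold expansionWeight
  positivity

lemma summable_expansionWeight_mul_pow {β : ℝ} (hβ : 0 ≤ β) (k : ℕ) {q : ℝ} (hq₀ : 0 < q)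
    (hq : q < 1) : Summable fun n => expansionWeight β k n * q ^ n := by
  have hshift := (summable_nat_add_iff (k + 1)).mpr
    (summable_pow_mul_geometric_of_norm_lt_one (k + 4) (r := q)
      (by rwa [Real.norm_of_nonneg hq₀.le]))
  refine .of_nonneg_of_le
    (fun n => mul_nonneg (expansionWeight_nonneg hβ k n) (pow_nonneg hq₀.le n)) (fun n => ?_)
    (hshift.mul_left ((1 + β) ^ 4 * (q ^ (k + 1))⁻¹))
  calc expansionWeight β k n * q ^ n
      ≤ (1 + β) ^ 4 * ((n + (k + 1) : ℕ) : ℝ) ^ (k + 4) * q ^ n := by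
        gcongr
        exact expansionWeight_le hβ k n
    _ = _ := by
        have hqk : q ^ (k + 1) ≠ 0 := (pow_pos hq₀ _).ne'
        rw [pow_add q n]
        field_simp

/-! ### Symbols with a nonresonant denominator -/

/-- The three-variable symbol `φ₁(x₁) φ₂(x₂) φ₃(x₃) / (|x₁|^{-β} - t |x₃|^{-β})^m`. The symbols in
the theorem have `β = α - 1` and `t = 1`; other `t` arise from dilating `x₁` and `x₃` by different
factors. -/
def nonresonantSymbol (β t : ℝ) (m : ℕ) (φ₁ φ₂ φ₃ : ℝ → ℂ) (x₁ x₂ x₃ : ℝ) : ℂ :=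
  φ₁ x₁ * φ₂ x₂ * φ₃ x₃ / ((|x₁| ^ (-β) - t * |x₃| ^ (-β) : ℝ) : ℂ) ^ m

lemma mul_rpow_neg_lt_rpow_neg {a b β t x z : ℝ} (ha : 0 < a) (hβ : 0 ≤ β) (ht₀ : 0 ≤ t)
    (ht : t * (b / a) ^ β < 1) (hx : x ∈ Set.Icc a b) (hz : a ≤ z) :
    t * z ^ (-β) < x ^ (-β) := by
  have hx₀ := ha.trans_le hx.1
  have hb := hx₀.trans_le hx.2
  calc t * z ^ (-β) ≤ t * a ^ (-β) :=
        mul_le_mul_of_nonneg_left (Real.rpow_le_rpow_of_nonpos ha hz (neg_nonpos.mpr hβ)) ht₀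
    _ = t * (b / a) ^ β * b ^ (-β) := by
        rw [Real.div_rpow hb.le ha.le, Real.rpow_neg ha.le, Real.rpow_neg hb.le]
        field_simp
    _ < 1 * b ^ (-β) := mul_lt_mul_of_pos_right ht (Real.rpow_pos_of_pos hb _)
    _ ≤ x ^ (-β) := by
        rw [one_mul]
        exact Real.rpow_le_rpow_of_nonpos hx₀ hx.2 (neg_nonpos.mpr hβ)

lemma hasSum_nonresonantSymbol {a b β t : ℝ} (ha : 0 < a) (hβ : 0 ≤ β) (ht₀ : 0 ≤ t)
    (ht : t * (b / a) ^ β < 1) {φ₁ φ₂ φ₃ : ℝ → ℂ} (hφ₁ : IsAnnularSymbol a b φ₁)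
    (hφ₃ : IsAnnularSymbol a b φ₃) (k : ℕ) (x₁ x₂ x₃ : ℝ) :
    HasSum (fun n : ℕ => ((n + k).choose k * t ^ n : ℂ) *
        (cutoffRpow (β * ↑(k + 1 + n)) φ₁ x₁ * φ₂ x₂ * cutoffRpow (-(β * n)) φ₃ x₃))
      (nonresonantSymbol β t (k + 1) φ₁ φ₂ φ₃ x₁ x₂ x₃) := by
  by_cases h₁ : φ₁ x₁ = 0
  · simp [nonresonantSymbol, cutoffRpow, h₁]
  by_cases h₃ : φ₃ x₃ = 0
  · simp [nonresonantSymbol, cutoffRpow, h₃]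
  have hlt := mul_rpow_neg_lt_rpow_neg ha hβ ht₀ ht (hφ₁.abs_mem_Icc _ h₁)
    (hφ₃.abs_mem_Icc _ h₃).1
  have hsum := hasSum_inv_sub_pow (𝕜 := ℂ) (A := (|x₁| ^ (-β) : ℝ)) (B := (t * |x₃| ^ (-β) : ℝ))
    (by simpa only [Complex.norm_real, Real.norm_of_nonneg (show 0 ≤ t * |x₃| ^ (-β) by positivity),
      Real.norm_of_nonneg (show 0 ≤ |x₁| ^ (-β) by positivity)] using hlt) k
  rw [nonresonantSymbol, Complex.ofReal_sub, div_eq_mul_inv]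
  refine (hsum.mul_left (φ₁ x₁ * φ₂ x₂ * φ₃ x₃)).congr_fun fun n => ?_
  have hpow₁ : |x₁| ^ (β * ↑(k + 1 + n)) = ((|x₁| ^ (-β))⁻¹) ^ (k + 1 + n) := by
    rw [Real.rpow_neg (abs_nonneg _), inv_inv, Real.rpow_mul_natCast (abs_nonneg _)]
  have hpow₃ : |x₃| ^ (-(β * n)) = (|x₃| ^ (-β)) ^ n := by
    rw [← neg_mul, Real.rpow_mul_natCast (abs_nonneg _)]
  simp only [cutoffRpow, hpow₁, hpow₃, Complex.real_smul]
  push_cast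
  ring

lemma exists_sInf3Norm_nonresonantSymbol_le {a b β Λ : ℝ} (ha : 0 < a) (hab : a ≤ b)
    (hβ : 0 ≤ β) (hΛ₀ : 0 < Λ) (hΛ : Λ * (b / a) ^ β < 1) {φ₁ φ₂ φ₃ : ℝ → ℂ}
    (hφ₁ : IsAnnularSymbol a b φ₁) (hφ₂ : MemW21 φ₂) (hφ₃ : IsAnnularSymbol a b φ₃) (k : ℕ) :
    ∃ C, ∀ t ∈ Set.Icc 0 Λ, sInf3Norm (nonresonantSymbol β t (k + 1) φ₁ φ₂ φ₃) ≤ C := by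
  have hb := ha.trans_le hab
  obtain ⟨C₁, hC₁, hle₁⟩ := hφ₁.exists_w21Norm_cutoffRpow_le ha
  obtain ⟨C₃, -, hle₃⟩ := hφ₃.exists_w21Norm_cutoffRpow_le ha
  set K := C₁ * C₃ * w21Norm φ₂ * b ^ (β * ↑(k + 1))
  have hw := w21Norm_nonneg φ₂
  refine ⟨π ^ 3 * ∑' n, K * (expansionWeight β k n * (Λ * (b / a) ^ β) ^ n), fun t ht =>
    sInf3Norm_le_of_hasSum (fun n => (hφ₁.cutoffRpow ha _).memW21) (fun _ => hφ₂)
      (fun n => (hφ₃.cutoffRpow ha _).memW21) (fun n => ?_)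
      ((summable_expansionWeight_mul_pow hβ k (by positivity) hΛ).mul_left K)
      (hasSum_nonresonantSymbol ha hβ ht.1
        ((mul_le_mul_of_nonneg_right ht.2 (by positivity)).trans_lt hΛ) hφ₁ hφ₃ k)⟩
  have h₁ := hle₁ (β * ↑(k + 1 + n)) (b ^ (β * ↑(k + 1 + n))) (by positivity) fun x hx =>
    Real.rpow_le_rpow (ha.le.trans hx.1) hx.2 (by positivity)
  have h₃ := hle₃ (-(β * n)) (a ^ (-(β * n))) (by positivity) fun x hx =>
    Real.rpow_le_rpow_of_nonpos ha hx.1 (neg_nonpos.mpr (by positivity))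
  rw [abs_of_nonneg (by positivity)] at h₁
  rw [abs_neg, abs_of_nonneg (by positivity)] at h₃
  calc _ ≤ ((n + k).choose k * Λ ^ n) *
        (C₁ * ((1 + β * ↑(k + 1 + n)) ^ 2 * b ^ (β * ↑(k + 1 + n))) *
          (w21Norm φ₂ * (C₃ * ((1 + β * n) ^ 2 * a ^ (-(β * n)))))) := by
        rw [norm_mul, norm_pow, Complex.norm_natCast, Complex.norm_real,
          Real.norm_of_nonneg ht.1]
        have := w21Norm_nonneg (cutoffRpow (β * ↑(k + 1 + n)) φ₁)
        have := w21Norm_nonneg (cutoffRpow (-(β * n)) φ₃)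
        have := ht.1
        gcongr
        exact ht.2
    _ = _ := by
        have hbpow : b ^ (β * ↑(k + 1 + n)) = b ^ (β * ↑(k + 1)) * (b ^ β) ^ n := by
          rw [← Real.rpow_mul_natCast hb.le, ← Real.rpow_add hb, Nat.cast_add (k + 1), mul_add]
        have hapow : a ^ (-(β * n)) = ((a ^ β) ^ n)⁻¹ := by
          rw [Real.rpow_neg ha.le, Real.rpow_mul_natCast ha.le]
        rw [hbpow, hapow, Real.div_rpow hb.le ha.le, mul_pow, div_pow]
        simp only [K, expansionWeight]
        ring

lemma sInf3Norm_nonresonantSymbol_swap (β : ℝ) (m : ℕ) (φ₁ φ₂ φ₃ : ℝ → ℂ) :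
    sInf3Norm (nonresonantSymbol β 1 m φ₁ φ₂ φ₃) =
      sInf3Norm (nonresonantSymbol β 1 m φ₃ φ₂ φ₁) := by
  have hswap : nonresonantSymbol β 1 m φ₁ φ₂ φ₃ =
      fun x₁ x₂ x₃ => (-1) ^ m * nonresonantSymbol β 1 m φ₃ φ₂ φ₁ x₃ x₂ x₁ := by
    ext x₁ x₂ x₃
    have hneg : |x₁| ^ (-β) - 1 * |x₃| ^ (-β) = (-1) * (|x₃| ^ (-β) - 1 * |x₁| ^ (-β)) := by ring
    rw [nonresonantSymbol, nonresonantSymbol, hneg, Complex.ofReal_mul, mul_pow, div_mul_eq_div_div,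
      div_eq_mul_inv (_ * φ₃ x₃)]
    push_cast
    rw [← inv_pow, inv_neg_one]
    ring
  rw [hswap, sInf3Norm_const_mul,
    sInf3Norm_reverse fun x₁ x₂ x₃ => nonresonantSymbol β 1 m φ₃ φ₂ φ₁ x₁ x₂ x₃]
  simp only [norm_pow, norm_neg, norm_one, one_pow, one_mul]

lemma sInf3Norm_nonresonantSymbol_dilate (β : ℝ) (m : ℕ) (φ₁ φ₂ φ₃ : ℝ → ℂ) {l₁ l₂ l₃ : ℝ}
    (h₁ : 0 < l₁) (h₂ : 0 < l₂) (h₃ : 0 < l₃) :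
    sInf3Norm (nonresonantSymbol β 1 m (fun x => φ₁ (l₁⁻¹ * x)) (fun x => φ₂ (l₂⁻¹ * x))
        (fun x => φ₃ (l₃⁻¹ * x))) =
      l₁ ^ (β * m) * sInf3Norm (nonresonantSymbol β ((l₃ / l₁) ^ (-β)) m φ₁ φ₂ φ₃) := by
  have hscale : ∀ l x : ℝ, 0 < l → |x| ^ (-β) = l ^ (-β) * |l⁻¹ * x| ^ (-β) := fun l x hl => by
    rw [← Real.mul_rpow hl.le (abs_nonneg _), abs_mul, abs_of_pos (inv_pos.mpr hl),
      mul_inv_cancel_left₀ hl.ne']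
  have hdilate : nonresonantSymbol β 1 m (fun x => φ₁ (l₁⁻¹ * x)) (fun x => φ₂ (l₂⁻¹ * x))
      (fun x => φ₃ (l₃⁻¹ * x)) = fun x₁ x₂ x₃ => ((l₁ ^ (β * m) : ℝ) : ℂ) *
        nonresonantSymbol β ((l₃ / l₁) ^ (-β)) m φ₁ φ₂ φ₃ (l₁⁻¹ * x₁) (l₂⁻¹ * x₂) (l₃⁻¹ * x₃) := by
    ext x₁ x₂ x₃
    have hden : |x₁| ^ (-β) - 1 * |x₃| ^ (-β) = (l₁ ^ β)⁻¹ *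
        (|l₁⁻¹ * x₁| ^ (-β) - (l₃ / l₁) ^ (-β) * |l₃⁻¹ * x₃| ^ (-β)) := by
      rw [hscale l₁ x₁ h₁, hscale l₃ x₃ h₃, Real.div_rpow h₃.le h₁.le, ← Real.rpow_neg h₁.le]
      field_simp
    rw [nonresonantSymbol, nonresonantSymbol, hden, Real.rpow_mul_natCast h₁.le, Complex.ofReal_mul,
      mul_pow, Complex.ofReal_inv, inv_pow, Complex.ofReal_pow, div_mul_eq_div_div, div_inv_eq_mul,
      mul_comm (_ * _ * _), mul_div_assoc]
  rw [hdilate, sInf3Norm_const_mul, Complex.norm_real, Real.norm_of_nonneg (by positivity),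
    sInf3Norm_comp_mul (inv_ne_zero h₁.ne') (inv_ne_zero h₂.ne') (inv_ne_zero h₃.ne')]

/-! ### Littlewood–Paley symbols -/

lemma lpSymb_eq_lpSymb_zero (ψ : ℝ → ℝ) (j : ℤ) (x : ℝ) :
    lpSymb ψ j x = lpSymb ψ 0 ((2 ^ j)⁻¹ * x) := by
  simp only [lpSymb, zero_sub, zpow_zero, div_one, zpow_sub₀ (two_ne_zero' ℝ), zpow_neg, zpow_one]
  congr 2 <;> field_simp

lemma isAnnularSymbol_lpSymb {ψ : ℝ → ℝ} {r R : ℝ} (hψ : ContDiff ℝ 2 ψ)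
    (hψsupp : ∀ ξ, ψ ξ ≠ 0 → |ξ| ≤ R) (hψone : ∀ ξ, |ξ| ≤ r → ψ ξ = 1) :
    IsAnnularSymbol (r / 2) R fun x => (lpSymb ψ 0 x : ℂ) where
  contDiff := Complex.ofRealCLM.contDiff.comp (f := lpSymb ψ 0) (by unfold lpSymb; fun_prop)
  abs_mem_Icc x hx := by
    rw [Complex.ofReal_ne_zero, lpSymb, zero_sub, zpow_zero, div_one, zpow_neg_one,
      div_inv_eq_mul] at hx
    have habs : |x * 2| = 2 * |x| := by rw [abs_mul, abs_two, mul_comm]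
    have habs₀ := abs_nonneg x
    constructor
    · by_contra! hlt
      exact hx (by rw [hψone x (by linarith), hψone (x * 2) (by linarith), sub_self])
    · by_contra! hlt
      have hzero : ∀ ξ, R < |ξ| → ψ ξ = 0 := fun ξ hξ =>
        by_contra fun h => (hψsupp ξ h).not_gt hξ
      exact hx (by rw [hzero x hlt, hzero (x * 2) (by linarith), sub_self])

lemma sInf3Norm_nonresonantSymbol_lpSymb (β : ℝ) (m : ℕ) (ψ : ℝ → ℝ) (j₁ j₂ j₃ : ℤ) :
    sInf3Norm (nonresonantSymbol β 1 m (fun x => (lpSymb ψ j₁ x : ℂ))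
        (fun x => (lpSymb ψ j₂ x : ℂ)) (fun x => (lpSymb ψ j₃ x : ℂ))) =
      2 ^ (m * β * j₁) * sInf3Norm (nonresonantSymbol β ((2 ^ j₃ / 2 ^ j₁) ^ (-β)) m
        (fun x => (lpSymb ψ 0 x : ℂ)) (fun x => (lpSymb ψ 0 x : ℂ))
        (fun x => (lpSymb ψ 0 x : ℂ))) := by
  have hscale : ((2 : ℝ) ^ j₁) ^ (β * m) = 2 ^ (m * β * j₁) := by
    rw [← Real.rpow_intCast, ← Real.rpow_mul zero_le_two]
    congr 1
    ring
  simp only [lpSymb_eq_lpSymb_zero ψ j₁, lpSymb_eq_lpSymb_zero ψ j₂, lpSymb_eq_lpSymb_zero ψ j₃]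
  rw [← hscale]
  exact sInf3Norm_nonresonantSymbol_dilate β m (fun x => (lpSymb ψ 0 x : ℂ))
    (fun x => (lpSymb ψ 0 x : ℂ)) (fun x => (lpSymb ψ 0 x : ℂ)) (zpow_pos two_pos j₁)
    (zpow_pos two_pos j₂) (zpow_pos two_pos j₃)

lemma exists_sInf3Norm_lpSymb_le {ψ : ℝ → ℝ} {r R β : ℝ} (hβ : 0 < β) (hψ : ContDiff ℝ 2 ψ)
    (hr : 0 < r) (hrR : R < 2 * r) (hψsupp : ∀ ξ, ψ ξ ≠ 0 → |ξ| ≤ R)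
    (hψone : ∀ ξ, |ξ| ≤ r → ψ ξ = 1) {m : ℕ} (hm : 0 < m) :
    ∃ C > 0, ∀ j₁ j₂ j₃ : ℤ, j₁ + 2 ≤ j₃ →
      sInf3Norm (nonresonantSymbol β 1 m (fun x => (lpSymb ψ j₁ x : ℂ))
        (fun x => (lpSymb ψ j₂ x : ℂ)) (fun x => (lpSymb ψ j₃ x : ℂ))) ≤
      C * 2 ^ (m * β * j₁) := by
  obtain ⟨k, rfl⟩ := Nat.exists_eq_succ_of_ne_zero hm.ne'
  have hr_le_R : r ≤ R := by
    simpa only [abs_of_pos hr] using hψsupp r (by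
      rw [hψone r (abs_of_pos hr).le]
      exact one_ne_zero)
  have hφ := isAnnularSymbol_lpSymb hψ hψsupp hψone
  have hratio : (4 : ℝ) ^ (-β) * (R / (r / 2)) ^ β < 1 := by
    rw [Real.rpow_neg zero_le_four, ← Real.inv_rpow zero_le_four,
      ← Real.mul_rpow (by norm_num) (div_nonneg (by linarith) (by linarith))]
    refine Real.rpow_lt_one
      (mul_nonneg (by norm_num) (div_nonneg (by linarith) (by linarith))) ?_ hβ
    rw [inv_mul_lt_iff₀ zero_lt_four, div_lt_iff₀ (half_pos hr)]
    linarith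
  obtain ⟨C, hC⟩ := exists_sInf3Norm_nonresonantSymbol_le (half_pos hr) (by linarith) hβ.le
    (by positivity) hratio hφ hφ.memW21 hφ k
  refine ⟨max C 1, by positivity, fun j₁ j₂ j₃ hj => ?_⟩
  have hgap : (4 : ℝ) ≤ 2 ^ j₃ / 2 ^ j₁ := by
    rw [← zpow_sub₀ two_ne_zero]
    exact (zpow_le_zpow_right₀ one_le_two (show (2 : ℤ) ≤ j₃ - j₁ by lia)).trans_eq' (by norm_num)
  have ht := Real.rpow_le_rpow_of_nonpos four_pos hgap (neg_nonpos.mpr hβ.le)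
  rw [sInf3Norm_nonresonantSymbol_lpSymb, mul_comm]
  gcongr
  exact (hC _ ⟨by positivity, ht⟩).trans (le_max_left C 1)

theorem nonresonant_symbol_bound_general (α : ℝ) (hα : 1 < α) (ψ : ℝ → ℝ) (hψ : ContDiff ℝ 2 ψ)
    (r R : ℝ) (hr : 0 < r) (hrR : R < 2 * r) (hψsupp : ∀ ξ, ψ ξ ≠ 0 → |ξ| ≤ R)
    (hψone : ∀ ξ, |ξ| ≤ r → ψ ξ = 1) (m : ℕ) (hm : 0 < m) :
    ∃ C > (0 : ℝ),
      ∀ j₁ j₂ j₃ : ℤ, 1 < |j₁ - j₃| →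
        sInf3Norm
            (fun η₁ η₂ η₃ =>
              ((lpSymb ψ j₁ η₁ * lpSymb ψ j₂ η₂ * lpSymb ψ j₃ η₃
                  / (|η₁| ^ (1 - α) - |η₃| ^ (1 - α)) ^ m : ℝ) : ℂ))
          ≤ C * (2 : ℝ) ^ ((m : ℝ) * (α - 1) * ((min j₁ j₃ : ℤ) : ℝ)) := by
  obtain ⟨C, hC, hbound⟩ :=
    exists_sInf3Norm_lpSymb_le (sub_pos.mpr hα) hψ hr hrR hψsupp hψone hm
  refine ⟨C, hC, fun j₁ j₂ j₃ hj => ?_⟩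
  have hsymbol : (fun η₁ η₂ η₃ => ((lpSymb ψ j₁ η₁ * lpSymb ψ j₂ η₂ * lpSymb ψ j₃ η₃
      / (|η₁| ^ (1 - α) - |η₃| ^ (1 - α)) ^ m : ℝ) : ℂ)) =
      nonresonantSymbol (α - 1) 1 m (fun x => (lpSymb ψ j₁ x : ℂ))
        (fun x => (lpSymb ψ j₂ x : ℂ)) (fun x => (lpSymb ψ j₃ x : ℂ)) := by
    ext η₁ η₂ η₃
    simp only [nonresonantSymbol, neg_sub, one_mul]
    push_cast
    rfl
  rw [hsymbol]
  rcases lt_abs.mp hj with h | h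
  · rw [min_eq_right (by lia), sInf3Norm_nonresonantSymbol_swap]
    exact hbound j₃ j₂ j₁ (by lia)
  · rw [min_eq_left (by lia)]
    exact hbound j₁ j₂ j₃ (by lia)

/-- **Nonresonant denominator estimate.** For `1 < α < 2`, `m ∈ ℤ₊` and `|j₁ - j₃| > 1`:
`‖ψ_{j₁}(η₁)ψ_{j₂}(η₂)ψ_{j₃}(η₃) / (|η₁|^{1-α} - |η₃|^{1-α})^m‖_{S^∞}
  ≲ 2^{m(α-1) min{j₁,j₃}}`. -/
theorem nonresonant_symbol_bound (α : ℝ) (hα1 : 1 < α) (hα2 : α < 2)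
    (ψ : ℝ → ℝ) (hψsm : ContDiff ℝ (⊤ : ℕ∞) ψ)
    (hψrange : ∀ ξ, ψ ξ ∈ Set.Icc (0 : ℝ) 1)
    (hψsupp : ∀ ξ, ψ ξ ≠ 0 → |ξ| ≤ 8 / 5)
    (hψone : ∀ ξ, |ξ| ≤ 5 / 4 → ψ ξ = 1)
    (m : ℕ) (hm : 0 < m) :
    ∃ C > (0 : ℝ),
      ∀ j₁ j₂ j₃ : ℤ, 1 < |j₁ - j₃| →
        sInf3Norm
            (fun η₁ η₂ η₃ =>
              ((lpSymb ψ j₁ η₁ * lpSymb ψ j₂ η₂ * lpSymb ψ j₃ η₃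
                  / (|η₁| ^ (1 - α) - |η₃| ^ (1 - α)) ^ m : ℝ) : ℂ))
          ≤ C * (2 : ℝ) ^ ((m : ℝ) * (α - 1) * ((min j₁ j₃ : ℤ) : ℝ)) :=
  nonresonant_symbol_bound_general α hα1 ψ (contDiff_infty.mp hψsm 2) (5 / 4) (8 / 5)
    (by norm_num) (by norm_num) hψsupp hψone m hm
end
end

section
/- Let α ∈ (1,2). For each n ≥ 1 there is a constant C(n,α) such that for all η = (η₁,…,η_{2n+1}) ∈ ℝ^{2n+1} with |η₁| ≤ |η₂| ≤ ⋯ ≤ |η_{2n+1}|, the symbol T_n satisfies the pointwise bound |T_n(η)| ≤ C(n,α) ( ∏_{k=1}^{2n} |η_k| ) |η_{2n}|^{1−α}. -/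
/-!
The bound needs no cancellation. Each factor `1 - e^{iη_jζ}` has modulus at most
`min(2, |η_jζ|)`. Bounding one factor by `2`, a second one by `min(2, |aζ|)` where `a` is its
frequency, and each of the other `2n - 1` by `|η_jζ|`, one dominates the integrand by
`2 (∏ |η_j|) min(2, |aζ|) |ζ|^{α-3}`, the product being over those other factors. This is
integrable because `1 < α < 2`, and rescaling `ζ` by `a` shows that its integral is a constant
multiple of `(∏ |η_j|) |a|^{2-α}`, where `|a|^{2-α} = |a| |a|^{1-α}`; for `a = 0` the latter reads
`0 = 0`, since Lean sets `0 ^ (1 - α) = 0`.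
-/

open MeasureTheory Real

noncomputable section

/-- The multilinear symbol
`T_n(η) = ∫ [∏_{j=1}^{2n+1} (1 - e^{iη_jζ})] ζ^{-(2n+1)} |ζ|^{α-1} sgn ζ dζ`. -/
def Tn (α : ℝ) (n : ℕ) (η : Fin (2 * n + 1) → ℝ) : ℂ :=
  ∫ ζ : ℝ,
    (∏ j, (1 - Complex.exp (Complex.I * (η j : ℝ) * ζ)))
      * ((|ζ| ^ (α - 1) * Real.sign ζ / ζ ^ (2 * n + 1) : ℝ) : ℂ)

section MinMulRpow

variable {c s : ℝ}

lemma integrableOn_Ioi_min_mul_rpow (hc : 0 ≤ c) (hs : -2 < s) (hs' : s < -1) :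
    IntegrableOn (fun t : ℝ => min c t * t ^ s) (Set.Ioi 0) := by
  have hmeas : Measurable fun t : ℝ => min c t * t ^ s := by fun_prop
  have hnonneg : ∀ t : ℝ, 0 < t → 0 ≤ min c t * t ^ s := fun t ht =>
    mul_nonneg (le_min hc ht.le) (rpow_nonneg ht.le s)
  have hnear : IntegrableOn (fun t : ℝ => t ^ (1 + s)) (Set.Ioc 0 1) :=
    (intervalIntegrable_iff_integrableOn_Ioc_of_le zero_le_one).1
      (intervalIntegral.intervalIntegrable_rpow' (by linarith))
  have hfar : IntegrableOn (fun t : ℝ => c * t ^ s) (Set.Ioi 1) :=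
    (integrableOn_Ioi_rpow_of_lt hs' one_pos).const_mul c
  rw [← Set.Ioc_union_Ioi_eq_Ioi (zero_le_one' ℝ)]
  refine IntegrableOn.union (hnear.mono' hmeas.aestronglyMeasurable ?_)
    (hfar.mono' hmeas.aestronglyMeasurable ?_)
  · filter_upwards [ae_restrict_mem measurableSet_Ioc] with t ht
    rw [norm_of_nonneg (hnonneg t ht.1), rpow_one_add' ht.1.le (by linarith)]
    exact mul_le_mul_of_nonneg_right (min_le_right c t) (rpow_nonneg ht.1.le s)
  · filter_upwards [ae_restrict_mem measurableSet_Ioi] with t ht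
    have ht₀ : 0 < t := one_pos.trans ht
    rw [norm_of_nonneg (hnonneg t ht₀)]
    exact mul_le_mul_of_nonneg_right (min_le_left c t) (rpow_nonneg ht₀.le s)

lemma integrable_min_abs_mul_abs_rpow (hc : 0 ≤ c) (hs : -2 < s) (hs' : s < -1) :
    Integrable fun x : ℝ => min c |x| * |x| ^ s := by
  have h := (integrable_fun_norm_addHaar (volume : Measure ℝ)
    (f := fun t : ℝ => min c t * t ^ s)).2
  simp only [Module.finrank_self, tsub_self, pow_zero, one_smul, norm_eq_abs] at h
  exact h (integrableOn_Ioi_min_mul_rpow hc hs hs')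

lemma abs_rpow_eq_mul_abs_mul_rpow {a : ℝ} (ha : a ≠ 0) (s x : ℝ) :
    |x| ^ s = |a| ^ (-s) * |a * x| ^ s := by
  rw [abs_mul, mul_rpow (abs_nonneg a) (abs_nonneg x), ← mul_assoc,
    ← rpow_add (abs_pos.2 ha), neg_add_cancel, rpow_zero, one_mul]

lemma min_abs_mul_left_mul_abs_rpow {a : ℝ} (ha : a ≠ 0) (c s x : ℝ) :
    min c |a * x| * |x| ^ s = |a| ^ (-s) * (min c |a * x| * |a * x| ^ s) := by
  rw [abs_rpow_eq_mul_abs_mul_rpow ha s x, mul_left_comm]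

lemma integrable_min_abs_mul_left_mul_abs_rpow (hc : 0 ≤ c) (hs : -2 < s) (hs' : s < -1)
    (a : ℝ) : Integrable fun x : ℝ => min c |a * x| * |x| ^ s := by
  rcases eq_or_ne a 0 with rfl | ha
  · simp [hc]
  · simp only [min_abs_mul_left_mul_abs_rpow ha]
    exact ((integrable_min_abs_mul_abs_rpow hc hs hs').comp_mul_left' ha).const_mul _

lemma integral_min_abs_mul_left_mul_abs_rpow (hc : 0 ≤ c) (hs : s ≠ -1) (a : ℝ) :
    ∫ x : ℝ, min c |a * x| * |x| ^ s = |a| ^ (-1 - s) * ∫ x : ℝ, min c |x| * |x| ^ s := by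
  rcases eq_or_ne a 0 with rfl | ha
  · have hexp : -1 - s ≠ 0 := fun h => hs (by linarith)
    simp [hc, zero_rpow hexp]
  · simp only [min_abs_mul_left_mul_abs_rpow ha]
    rw [integral_const_mul, Measure.integral_comp_mul_left (fun y => min c |y| * |y| ^ s) a,
      smul_eq_mul, abs_inv, ← rpow_neg_one, ← mul_assoc, ← rpow_add (abs_pos.2 ha)]
    ring_nf

end MinMulRpow

lemma norm_one_sub_exp_I_mul_le (a x : ℝ) :
    ‖1 - Complex.exp (Complex.I * a * x)‖ ≤ min 2 |a * x| := by
  rw [norm_sub_rev, mul_assoc, ← Complex.ofReal_mul]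
  refine le_min ?_ norm_exp_I_mul_ofReal_sub_one_le
  rw [Complex.norm_exp_I_mul_ofReal_sub_one, norm_mul, norm_ofNat]
  exact mul_le_of_le_one_right zero_le_two (abs_sin_le_one _)

lemma prod_norm_one_sub_exp_I_mul_le {ι : Type*} [DecidableEq ι] {s : Finset ι} {k : ι}
    (hk : k ∈ s) (η : ι → ℝ) (x : ℝ) :
    ∏ i ∈ s, ‖1 - Complex.exp (Complex.I * η i * x)‖
      ≤ min 2 |η k * x| * ((∏ i ∈ s.erase k, |η i|) * |x| ^ (s.erase k).card) := by
  rw [← Finset.mul_prod_erase _ _ hk, Finset.prod_mul_pow_card]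
  gcongr with i
  · exact norm_one_sub_exp_I_mul_le (η k) x
  · exact (norm_one_sub_exp_I_mul_le (η i) x).trans ((min_le_right _ _).trans_eq (abs_mul _ _))

lemma abs_abs_rpow_mul_sign_div_pow {x : ℝ} (hx : x ≠ 0) (s : ℝ) (m : ℕ) :
    |(|x| ^ s * sign x / x ^ m)| = |x| ^ (s - m) := by
  have hsign : |sign x| = 1 := by
    rcases sign_apply_eq_of_ne_zero x hx with h | h <;> simp [h]
  rw [abs_div, abs_mul, hsign, mul_one, abs_pow, abs_of_nonneg (rpow_nonneg (abs_nonneg x) s),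
    rpow_sub_natCast (abs_ne_zero.2 hx)]

section Symbol

variable {α : ℝ} {n : ℕ} (η : Fin (2 * n + 1) → ℝ) (j : Fin (2 * n + 1)) (k : Fin (2 * n))

lemma norm_Tn_integrand_le (ζ : ℝ) :
    ‖(∏ i, (1 - Complex.exp (Complex.I * (η i : ℝ) * ζ)))
        * ((|ζ| ^ (α - 1) * sign ζ / ζ ^ (2 * n + 1) : ℝ) : ℂ)‖
      ≤ 2 * (∏ i ∈ Finset.univ.erase k, |η (j.succAbove i)|)
        * (min 2 |η (j.succAbove k) * ζ| * |ζ| ^ (α - 3)) := by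
  rcases eq_or_ne ζ 0 with rfl | hζ
  · simp
  have hcard : (Finset.univ.erase k).card + 2 = 2 * n + 1 := by
    have := k.pos
    rw [Finset.card_erase_of_mem (Finset.mem_univ k), Finset.card_fin]
    omega
  have hpow : |ζ| ^ (Finset.univ.erase k).card * |ζ| ^ (α - 1 - (2 * n + 1 : ℕ))
      = |ζ| ^ (α - 3) := by
    rw [← rpow_natCast, ← rpow_add (abs_pos.2 hζ), ← hcard]
    push_cast
    ring_nf
  have hj : ‖1 - Complex.exp (Complex.I * η j * ζ)‖ ≤ 2 :=
    (norm_one_sub_exp_I_mul_le (η j) ζ).trans (min_le_left _ _)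
  have hrest := prod_norm_one_sub_exp_I_mul_le (Finset.mem_univ k) (η ∘ j.succAbove) ζ
  rw [norm_mul, norm_prod, Fin.prod_univ_succAbove _ j, Complex.norm_real, norm_eq_abs,
    abs_abs_rpow_mul_sign_div_pow hζ, ← hpow]
  refine (mul_le_mul_of_nonneg_right
    (mul_le_mul hj hrest (Finset.prod_nonneg fun _ _ => norm_nonneg _) zero_le_two)
    (rpow_nonneg (abs_nonneg ζ) _)).trans_eq ?_
  simp only [Function.comp_apply]
  ring

lemma norm_Tn_le (hα1 : 1 < α) (hα2 : α < 2) :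
    ‖Tn α n η‖ ≤ 2 * (∫ x : ℝ, min 2 |x| * |x| ^ (α - 3))
      * (∏ i, |η (j.succAbove i)|) * |η (j.succAbove k)| ^ (1 - α) := by
  set a := η (j.succAbove k)
  set Q := ∏ i ∈ Finset.univ.erase k, |η (j.succAbove i)|
  have hprod : ∏ i, |η (j.succAbove i)| = |a| * Q :=
    (Finset.mul_prod_erase _ _ (Finset.mem_univ k)).symm
  have hscale : |a| ^ (-1 - (α - 3)) = |a| * |a| ^ (1 - α) := by
    rw [← rpow_one_add' (abs_nonneg a) (by linarith)]
    ring_nf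
  calc ‖Tn α n η‖
      ≤ ∫ ζ : ℝ, 2 * Q * (min 2 |a * ζ| * |ζ| ^ (α - 3)) :=
        norm_integral_le_of_norm_le
          ((integrable_min_abs_mul_left_mul_abs_rpow zero_le_two (by linarith) (by linarith)
            a).const_mul _)
          (.of_forall (norm_Tn_integrand_le η j k))
    _ = 2 * Q * (|a| ^ (-1 - (α - 3)) * ∫ x : ℝ, min 2 |x| * |x| ^ (α - 3)) := by
        rw [integral_const_mul, integral_min_abs_mul_left_mul_abs_rpow zero_le_two (by linarith)]
    _ = 2 * (∫ x : ℝ, min 2 |x| * |x| ^ (α - 3)) * (∏ i, |η (j.succAbove i)|)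
          * |a| ^ (1 - α) := by
        rw [hscale, hprod]
        ring

end Symbol

theorem Tn_pointwise_bound_general {α : ℝ} (hα1 : 1 < α) (hα2 : α < 2) :
    ∃ C > (0 : ℝ),
      ∀ (n : ℕ) (η : Fin (2 * n + 1) → ℝ) (j : Fin (2 * n + 1)) (k : Fin (2 * n)),
        ‖Tn α n η‖ ≤ C * (∏ i, |η (j.succAbove i)|) * |η (j.succAbove k)| ^ (1 - α) := by
  have hI : 0 ≤ ∫ x : ℝ, min 2 |x| * |x| ^ (α - 3) := integral_nonneg fun x => by positivity
  refine ⟨2 * (∫ x : ℝ, min 2 |x| * |x| ^ (α - 3)) + 1,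
    add_pos_of_nonneg_of_pos (mul_nonneg zero_le_two hI) one_pos, fun n η j k => ?_⟩
  refine (norm_Tn_le η j k hα1 hα2).trans ?_
  gcongr
  exact le_add_of_nonneg_right zero_le_one

/-- **Pointwise bound for `T_n`.** If `|η₁| ≤ |η₂| ≤ ⋯ ≤ |η_{2n+1}|`, then
`|T_n(η)| ≤ C(n,α) (∏_{k=1}^{2n} |η_k|) |η_{2n}|^{1-α}`. -/
theorem Tn_pointwise_bound (α : ℝ) (hα1 : 1 < α) (hα2 : α < 2)
    (n : ℕ) (hn : 1 ≤ n) :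
    ∃ C > (0 : ℝ),
      ∀ η : Fin (2 * n + 1) → ℝ,
        (∀ i j : Fin (2 * n + 1), i ≤ j → |η i| ≤ |η j|) →
        ‖Tn α n η‖
          ≤ C * (∏ i : Fin (2 * n), |η i.castSucc|)
              * |η ⟨2 * n - 1, by omega⟩| ^ (1 - α) := by
  obtain ⟨C, hC, h⟩ := Tn_pointwise_bound_general hα1 hα2
  refine ⟨C, hC, fun η _ => ?_⟩
  simpa only [Fin.succAbove_last] using! h n η (Fin.last _) ⟨2 * n - 1, by omega⟩
end
end

section
/- Let α ∈ (1,2). For each n ≥ 1 there is a constant C(n,α) such that for all j₁,…,j_{2n+1} ∈ ℤ, ‖ F^{−1}[ T_n(η₁,…,η_{2n+1}) ψ_{j₁}(η₁)⋯ψ_{j_{2n+1}}(η_{2n+1}) ] ‖_{L¹(ℝ^{2n+1})} ≤ C(n,α) 2^{(2−α)ℓ₂ + ℓ₃ + ⋯ + ℓ_{2n+1}}, where ℓ₁ ≥ ℓ₂ ≥ ⋯ ≥ ℓ_{2n+1} is the decreasing rearrangement of (j₁,…,j_{2n+1}). -/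
/-!
For fixed `ζ`, the symbol `∏ᵢ (1 - e^{iηᵢζ}) ψ_{jᵢ}(ηᵢ)` is a tensor product, and its inverse
Fourier transform is `∏ᵢ (φ_{jᵢ}(yᵢ) - φ_{jᵢ}(yᵢ + ζ))`, where `φ_k` is the inverse transform of
`ψ_k`. The `φ_k` are `L¹`-normalised dilates of a single Schwartz function, so the factor of index
`i` has `L¹` norm at most a constant times `min(1, 2^{jᵢ}|ζ|)`. Minkowski's inequality in `ζ` then
bounds the `L¹` norm in question by a constant times
`∫ |ζ|^{α-1-(2n+1)} ∏ᵢ min(1, 2^{jᵢ}|ζ|) dζ`.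

Bounding the minima that belong to `ℓ₃, …, ℓ_{2n+1}` by `2^{ℓᵢ}|ζ|` and the one that belongs to `ℓ₁`
by `1` leaves `2^{ℓ₃+⋯+ℓ_{2n+1}} ∫ min(1, 2^{ℓ₂}|ζ|) |ζ|^{α-3} dζ`, which scales to a constant times
`2^{(2-α)ℓ₂+ℓ₃+⋯+ℓ_{2n+1}}`; the constant is finite exactly because `1 < α < 2`. Ordering the `jᵢ`
decreasingly makes the bound the best of this form, but the argument works for every ordering.
-/

open MeasureTheory Real
open scoped ENNReal

noncomputable section

open scoped FourierTransform SchwartzMap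

/-! ### `L¹` norms -/

section L1

variable {X Y E : Type*} [MeasurableSpace X] [MeasurableSpace Y] [NormedAddCommGroup E]
  [NormedSpace ℝ E] {μ : Measure X} {ν : Measure Y}

theorem eLpNorm_one_integral_le [SFinite μ] [SFinite ν] {F : X → Y → E}
    (hF : AEStronglyMeasurable (Function.uncurry F) (μ.prod ν)) :
    eLpNorm (fun x ↦ ∫ y, F x y ∂ν) 1 μ ≤ ∫⁻ y, eLpNorm (fun x ↦ F x y) 1 μ ∂ν := by
  simp only [eLpNorm_one_eq_lintegral_enorm]
  calc
    ∫⁻ x, ‖∫ y, F x y ∂ν‖ₑ ∂μ ≤ ∫⁻ x, ∫⁻ y, ‖F x y‖ₑ ∂ν ∂μ :=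
      lintegral_mono fun _ ↦ enorm_integral_le_lintegral_enorm _
    _ = ∫⁻ y, ∫⁻ x, ‖F x y‖ₑ ∂μ ∂ν := lintegral_lintegral_swap hF.enorm

theorem eLpNorm_one_fintype_prod {ι 𝕜 : Type*} [Fintype ι] [RCLike 𝕜] {Ω : ι → Type*}
    [∀ i, MeasurableSpace (Ω i)] {μ : ∀ i, Measure (Ω i)} [∀ i, SigmaFinite (μ i)]
    {f : ∀ i, Ω i → 𝕜} (hf : ∀ i, Integrable (f i) (μ i)) :
    eLpNorm (fun x : ∀ i, Ω i ↦ ∏ i, f i (x i)) 1 (Measure.pi μ) =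
      ∏ i, eLpNorm (f i) 1 (μ i) := by
  simp only [eLpNorm_one_eq_lintegral_enorm]
  rw [← ofReal_integral_norm_eq_lintegral_enorm (Integrable.fintype_prod_dep hf)]
  simp only [norm_prod, ← ofReal_integral_norm_eq_lintegral_enorm (hf _)]
  rw [integral_fintype_prod_eq_prod fun i x ↦ ‖f i x‖,
    ENNReal.ofReal_prod_of_nonneg fun i _ ↦ integral_nonneg fun _ ↦ norm_nonneg _]

theorem eLpNorm_one_smul_comp_mul_left (f : ℝ → E) {R : ℝ} (hR : R ≠ 0) :
    eLpNorm (fun x ↦ R • f (R * x)) 1 volume = eLpNorm f 1 volume := by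
  simp only [eLpNorm_one_eq_lintegral_enorm, enorm_smul]
  calc
    ∫⁻ x, ‖R‖ₑ * ‖f (R * x)‖ₑ = ‖R‖ₑ * ∫⁻ x, ‖f x‖ₑ ∂volume.map (R * ·) := by
      rw [lintegral_const_mul' _ _ enorm_ne_top]
      exact congrArg (‖R‖ₑ * ·)
        (lintegral_map_equiv (fun x ↦ ‖f x‖ₑ) (MeasurableEquiv.mulLeft₀ R hR)).symm
    _ = ∫⁻ x, ‖f x‖ₑ := by
      rw [Real.map_volume_mul_left hR, lintegral_smul_measure, smul_eq_mul, ← mul_assoc,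
        enorm_eq_ofReal_abs, ← ENNReal.ofReal_mul (abs_nonneg R), ← abs_mul, mul_inv_cancel₀ hR,
        abs_one, ENNReal.ofReal_one, one_mul]

end L1

section Translation

theorem eLpNorm_one_sub_translate_le {V E : Type*} [AddGroup V] [MeasurableSpace V]
    [MeasurableAdd V] [NormedAddCommGroup E] {μ : Measure V} [μ.IsAddRightInvariant] {f : V → E}
    (hf : AEStronglyMeasurable f μ) (h : V) :
    eLpNorm (fun u ↦ f u - f (u + h)) 1 μ ≤ 2 * eLpNorm f 1 μ := by
  have hshift := measurePreserving_add_right μ h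
  calc
    eLpNorm (fun u ↦ f u - f (u + h)) 1 μ
      ≤ eLpNorm f 1 μ + eLpNorm (f ∘ (· + h)) 1 μ :=
      eLpNorm_sub_le hf (hf.comp_measurePreserving hshift) le_rfl
    _ = 2 * eLpNorm f 1 μ := by rw [eLpNorm_comp_measurePreserving hf hshift, two_mul]

variable {V E : Type*} [NormedAddCommGroup V] [NormedSpace ℝ V] [NormedAddCommGroup E]
  [NormedSpace ℝ E]

lemma enorm_sub_translate_le {f : V → E} (hf : ContDiff ℝ 1 f) (u h : V) :
    ‖f u - f (u + h)‖ₑ ≤ ∫⁻ t in Set.Icc (0 : ℝ) 1, ‖h‖ₑ * ‖fderiv ℝ f (u + t • h)‖ₑ := by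
  have hderiv (t : ℝ) :
      HasDerivAt (fun t : ℝ ↦ f (u + t • h)) (fderiv ℝ f (u + t • h) h) t := by
    have hline : HasDerivAt (fun t : ℝ ↦ u + t • h) h t := by
      simpa using ((hasDerivAt_id t).smul_const h).const_add u
    exact ((hf.differentiable one_ne_zero) _).hasFDerivAt.comp_hasDerivAt t hline
  have hpath : ContDiff ℝ 1 fun t : ℝ ↦ f (u + t • h) := by fun_prop
  calc
    ‖f u - f (u + h)‖ₑ = ‖f (u + (1 : ℝ) • h) - f (u + (0 : ℝ) • h)‖ₑ := by
      rw [one_smul, zero_smul, add_zero, enorm_sub_rev]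
    _ ≤ ∫⁻ t in Set.Icc (0 : ℝ) 1, ‖deriv (fun t : ℝ ↦ f (u + t • h)) t‖ₑ :=
      enorm_sub_le_lintegral_deriv_of_contDiffOn_Icc hpath.contDiffOn zero_le_one
    _ ≤ ∫⁻ t in Set.Icc (0 : ℝ) 1, ‖h‖ₑ * ‖fderiv ℝ f (u + t • h)‖ₑ :=
      lintegral_mono fun t ↦ by
        rw [(hderiv t).deriv, mul_comm]
        exact ContinuousLinearMap.le_opENorm _ _

variable [MeasurableSpace V] [BorelSpace V] {μ : Measure V} [μ.IsAddRightInvariant]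

theorem eLpNorm_one_sub_translate_le_fderiv [SFinite μ] {f : V → E} (hf : ContDiff ℝ 1 f) (h : V) :
    eLpNorm (fun u ↦ f u - f (u + h)) 1 μ ≤ ‖h‖ₑ * eLpNorm (fderiv ℝ f) 1 μ := by
  have _hcont : Continuous (fderiv ℝ f) := hf.continuous_fderiv one_ne_zero
  simp only [eLpNorm_one_eq_lintegral_enorm]
  calc
    ∫⁻ u, ‖f u - f (u + h)‖ₑ ∂μ
      ≤ ∫⁻ u, ∫⁻ t in Set.Icc (0 : ℝ) 1, ‖h‖ₑ * ‖fderiv ℝ f (u + t • h)‖ₑ ∂volume ∂μ :=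
      lintegral_mono fun u ↦ enorm_sub_translate_le hf u h
    _ = ∫⁻ t in Set.Icc (0 : ℝ) 1, ∫⁻ u, ‖h‖ₑ * ‖fderiv ℝ f (u + t • h)‖ₑ ∂μ := by
      refine lintegral_lintegral_swap (Measurable.aemeasurable ?_)
      exact (show Continuous fun p : V × ℝ ↦ ‖fderiv ℝ f (p.1 + p.2 • h)‖ₑ by
        fun_prop).measurable.const_mul _
    _ = ∫⁻ _ in Set.Icc (0 : ℝ) 1, ‖h‖ₑ * ∫⁻ u, ‖fderiv ℝ f u‖ₑ ∂μ :=
      lintegral_congr fun t ↦ by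
        rw [lintegral_const_mul' _ _ enorm_ne_top,
          lintegral_add_right_eq_self fun u ↦ ‖fderiv ℝ f u‖ₑ]
    _ = ‖h‖ₑ * ∫⁻ u, ‖fderiv ℝ f u‖ₑ ∂μ := by simp

theorem exists_eLpNorm_one_sub_translate_le_min [SecondCountableTopology V] [SFinite μ]
    [μ.HasTemperateGrowth] (f : 𝓢(V, E)) :
    ∃ K > 0, ∀ h, eLpNorm (fun u ↦ f u - f (u + h)) 1 μ ≤ ENNReal.ofReal (K * min 1 ‖h‖) := by
  set M := eLpNorm f 1 μ
  set M' := eLpNorm (fderiv ℝ f) 1 μ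
  have hM : M ≠ ∞ := (memLp_one_iff_integrable.2 f.integrable).eLpNorm_ne_top
  have hM' : M' ≠ ∞ :=
    (memLp_one_iff_integrable.2 (SchwartzMap.fderivCLM ℝ V E f).integrable).eLpNorm_ne_top
  refine ⟨2 * M.toReal + M'.toReal + 1, by positivity, fun h ↦ ?_⟩
  rcases le_total 1 ‖h‖ with hh | hh
  · calc
      eLpNorm (fun u ↦ f u - f (u + h)) 1 μ ≤ 2 * M :=
        eLpNorm_one_sub_translate_le f.integrable.aestronglyMeasurable h
      _ = ENNReal.ofReal (2 * M.toReal) := by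
        rw [ENNReal.ofReal_mul two_pos.le, ENNReal.ofReal_toReal hM, ENNReal.ofReal_ofNat]
      _ ≤ ENNReal.ofReal ((2 * M.toReal + M'.toReal + 1) * min 1 ‖h‖) := by
        rw [min_eq_left hh]
        refine ENNReal.ofReal_le_ofReal ?_
        linarith [M'.toReal_nonneg]
  · calc
      eLpNorm (fun u ↦ f u - f (u + h)) 1 μ ≤ ‖h‖ₑ * M' :=
        eLpNorm_one_sub_translate_le_fderiv (f.smooth 1) h
      _ = ENNReal.ofReal (M'.toReal * ‖h‖) := by
        rw [mul_comm, ENNReal.ofReal_mul M'.toReal_nonneg, ENNReal.ofReal_toReal hM',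
          ofReal_norm]
      _ ≤ ENNReal.ofReal ((2 * M.toReal + M'.toReal + 1) * min 1 ‖h‖) := by
        rw [min_eq_right hh]
        gcongr
        linarith [M.toReal_nonneg]

end Translation

/-! ### The scalar integral -/

section ScalarIntegral

theorem integrable_min_one_mul_abs_rpow {s : ℝ} (hs₂ : -2 < s) (hs₁ : s < -1) :
    Integrable fun u : ℝ ↦ min 1 |u| * |u| ^ s := by
  have hIoc : IntegrableOn (fun u : ℝ ↦ min 1 u * u ^ s) (Set.Ioc 0 1) := by
    have hpow : IntegrableOn (fun u : ℝ ↦ u ^ (1 + s)) (Set.Ioc 0 1) :=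
      (intervalIntegrable_iff_integrableOn_Ioc_of_le zero_le_one).1
        (intervalIntegral.intervalIntegrable_rpow' (by linarith))
    refine hpow.congr_fun (fun u hu ↦ ?_) measurableSet_Ioc
    simp only [min_eq_right hu.2, rpow_add hu.1, rpow_one]
  have hIoi : IntegrableOn (fun u : ℝ ↦ min 1 u * u ^ s) (Set.Ioi 1) := by
    refine (integrableOn_Ioi_rpow_of_lt hs₁ zero_lt_one).congr_fun (fun u hu ↦ ?_)
      measurableSet_Ioi
    simp only [min_eq_left (Set.mem_Ioi.1 hu).le, one_mul]
  refine (integrable_fun_norm_addHaar (volume : Measure ℝ) (f := fun u ↦ min 1 u * u ^ s)).2 ?_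
  simpa [Set.Ioc_union_Ioi_eq_Ioi (zero_le_one (α := ℝ))] using hIoc.union hIoi

lemma min_one_mul_abs_rpow_eq_dilate {R : ℝ} (hR : 0 < R) (s ζ : ℝ) :
    min 1 (R * |ζ|) * |ζ| ^ s = R ^ (-s) * (min 1 |R * ζ| * |R * ζ| ^ s) := by
  rw [abs_mul, abs_of_pos hR, mul_rpow hR.le (abs_nonneg ζ), rpow_neg hR.le]
  field_simp

theorem integrable_min_one_mul_abs_rpow_dilate {R s : ℝ} (hR : 0 < R) (hs₂ : -2 < s)
    (hs₁ : s < -1) : Integrable fun ζ : ℝ ↦ min 1 (R * |ζ|) * |ζ| ^ s := by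
  simp only [min_one_mul_abs_rpow_eq_dilate hR]
  exact ((integrable_min_one_mul_abs_rpow hs₂ hs₁).comp_mul_left' hR.ne').const_mul _

theorem integral_min_one_mul_abs_rpow_dilate {R : ℝ} (hR : 0 < R) (s : ℝ) :
    ∫ ζ : ℝ, min 1 (R * |ζ|) * |ζ| ^ s =
      R ^ (-s - 1) * ∫ u : ℝ, min 1 |u| * |u| ^ s := by
  simp only [min_one_mul_abs_rpow_eq_dilate hR, integral_const_mul]
  rw [Measure.integral_comp_mul_left fun u ↦ min 1 |u| * |u| ^ s, abs_of_pos (inv_pos.2 hR),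
    smul_eq_mul, rpow_sub_one hR.ne']
  ring

lemma integral_min_one_mul_abs_rpow_pos {s : ℝ} (hs₂ : -2 < s) (hs₁ : s < -1) :
    0 < ∫ u : ℝ, min 1 |u| * |u| ^ s := by
  refine (integral_pos_iff_support_of_nonneg (fun u ↦ by positivity)
    (integrable_min_one_mul_abs_rpow hs₂ hs₁)).2 ?_
  refine lt_of_lt_of_le (b := volume (Set.Ioi (0 : ℝ))) (by simp) (measure_mono fun u hu ↦ ?_)
  have hu : 0 < u := hu
  exact (show 0 < min 1 |u| * |u| ^ s by positivity).ne'

end ScalarIntegral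

section ProductOfMinima

variable {ι : Type*} [Fintype ι]

lemma prod_min_one_le {a : ι → ℝ} (ha : ∀ i, 0 ≤ a i) {s : Finset ι} {b : ι} (hb : b ∉ s) :
    ∏ i, min 1 (a i) ≤ min 1 (a b) * ∏ i ∈ s, a i := by
  classical
  have hmin : ∀ i, 0 ≤ min 1 (a i) := fun i ↦ le_min zero_le_one (ha i)
  calc
    ∏ i, min 1 (a i) ≤ ∏ i ∈ insert b s, min 1 (a i) :=
      Finset.prod_le_prod_of_subset_of_le_one (Finset.subset_univ _) (fun i _ ↦ hmin i)
        fun i _ _ ↦ min_le_left _ _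
    _ = min 1 (a b) * ∏ i ∈ s, min 1 (a i) := Finset.prod_insert hb
    _ ≤ min 1 (a b) * ∏ i ∈ s, a i :=
      mul_le_mul_of_nonneg_left
        (Finset.prod_le_prod (fun i _ ↦ hmin i) fun i _ ↦ min_le_right _ _) (hmin b)

variable {R : ι → ℝ} {s : Finset ι} {b : ι} {β : ℝ}

lemma abs_rpow_mul_prod_min_one_le (hR : ∀ i, 0 < R i) (hb : b ∉ s) (β ζ : ℝ) :
    |ζ| ^ (β - s.card) * ∏ i, min 1 (R i * |ζ|) ≤
      (∏ i ∈ s, R i) * (min 1 (R b * |ζ|) * |ζ| ^ β) := by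
  rcases eq_or_ne ζ 0 with rfl | hζ
  · rw [Finset.prod_eq_zero (Finset.mem_univ b) (by simp)]
    simp
  · have hζ : 0 < |ζ| := abs_pos.2 hζ
    calc
      |ζ| ^ (β - s.card) * ∏ i, min 1 (R i * |ζ|)
        ≤ |ζ| ^ (β - s.card) * (min 1 (R b * |ζ|) * ∏ i ∈ s, R i * |ζ|) := by
        gcongr
        exact prod_min_one_le (fun i ↦ (mul_pos (hR i) hζ).le) hb
      _ = (∏ i ∈ s, R i) * (min 1 (R b * |ζ|) * |ζ| ^ β) := by
        rw [Finset.prod_mul_distrib, Finset.prod_const, rpow_sub_natCast hζ.ne']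
        field_simp

theorem integrable_abs_rpow_mul_prod_min_one (hR : ∀ i, 0 < R i) (hb : b ∉ s) (hβ₂ : -2 < β)
    (hβ₁ : β < -1) : Integrable fun ζ : ℝ ↦ |ζ| ^ (β - s.card) * ∏ i, min 1 (R i * |ζ|) := by
  refine ((integrable_min_one_mul_abs_rpow_dilate (hR b) hβ₂ hβ₁).const_mul (∏ i ∈ s, R i)).mono'
    (by fun_prop) (.of_forall fun ζ ↦ ?_)
  have hnonneg : 0 ≤ |ζ| ^ (β - s.card) * ∏ i, min 1 (R i * |ζ|) :=
    mul_nonneg (by positivity) (Finset.prod_nonneg fun i _ ↦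
      le_min zero_le_one (mul_nonneg (hR i).le (abs_nonneg ζ)))
  rw [norm_of_nonneg hnonneg]
  exact abs_rpow_mul_prod_min_one_le hR hb β ζ

theorem integral_abs_rpow_mul_prod_min_one_le (hR : ∀ i, 0 < R i) (hb : b ∉ s) (hβ₂ : -2 < β)
    (hβ₁ : β < -1) :
    ∫ ζ : ℝ, |ζ| ^ (β - s.card) * ∏ i, min 1 (R i * |ζ|) ≤
      (R b ^ (-β - 1) * ∏ i ∈ s, R i) * ∫ u : ℝ, min 1 |u| * |u| ^ β := by
  calc
    ∫ ζ : ℝ, |ζ| ^ (β - s.card) * ∏ i, min 1 (R i * |ζ|)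
      ≤ ∫ ζ : ℝ, (∏ i ∈ s, R i) * (min 1 (R b * |ζ|) * |ζ| ^ β) :=
      integral_mono (integrable_abs_rpow_mul_prod_min_one hR hb hβ₂ hβ₁)
        ((integrable_min_one_mul_abs_rpow_dilate (hR b) hβ₂ hβ₁).const_mul _)
        (abs_rpow_mul_prod_min_one_le hR hb β)
    _ = (R b ^ (-β - 1) * ∏ i ∈ s, R i) * ∫ u : ℝ, min 1 |u| * |u| ^ β := by
      rw [integral_const_mul, integral_min_one_mul_abs_rpow_dilate (hR b)]
      ring

end ProductOfMinima

/-! ### The inverse Fourier transform -/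

section InvFourier

/-- The inverse Fourier transform of a function on `ℝ` in the angular-frequency normalisation of
the statement: the phase is `e^{iηy}`, with no factor `1 / (2π)`. -/
def invFourier (f : ℝ → ℂ) (y : ℝ) : ℂ :=
  ∫ η : ℝ, f η * Complex.exp (Complex.I * (η * y : ℝ))

lemma integrable_mul_exp {f : ℝ → ℂ} (hf : Integrable f) (y : ℝ) :
    Integrable fun η : ℝ ↦ f η * Complex.exp (Complex.I * (η * y : ℝ)) :=
  hf.mul_bdd (c := 1) (by fun_prop) (.of_forall fun η ↦ (Complex.norm_exp_I_mul_ofReal _).le)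

lemma invFourier_eq_fourierInv (f : ℝ → ℂ) (y : ℝ) : invFourier f y = 𝓕⁻ f ((2 * π)⁻¹ * y) := by
  rw [Real.fourierInv_eq', invFourier]
  refine integral_congr_ae (.of_forall fun η ↦ ?_)
  have hphase : 2 * π * inner ℝ η ((2 * π)⁻¹ * y) = η * y := by
    simp only [RCLike.inner_apply, conj_trivial]
    field_simp
  simp only [hphase, smul_eq_mul, mul_comm Complex.I, mul_comm (f η)]

lemma continuous_invFourier {f : ℝ → ℂ} (hf : Integrable f) : Continuous (invFourier f) :=
  continuous_of_dominated (fun y ↦ (integrable_mul_exp hf y).1)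
    (fun y ↦ .of_forall fun η ↦ by rw [norm_mul, Complex.norm_exp_I_mul_ofReal, mul_one])
    hf.norm (.of_forall fun η ↦ by fun_prop)

lemma invFourier_comp_div (f : ℝ → ℂ) {R : ℝ} (hR : 0 < R) (y : ℝ) :
    invFourier (fun η ↦ f (η / R)) y = R * invFourier f (R * y) := by
  have hscale := Measure.integral_comp_div
    (fun η : ℝ ↦ f η * Complex.exp (Complex.I * (η * (R * y) : ℝ))) R
  rw [abs_of_pos hR, Complex.real_smul] at hscale
  rw [invFourier, invFourier, ← hscale]
  refine integral_congr_ae (.of_forall fun η ↦ ?_)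
  simp only [← mul_assoc, div_mul_cancel₀ η hR.ne']

lemma invFourier_sub_invFourier_add {f : ℝ → ℂ} (hf : Integrable f) (y ζ : ℝ) :
    invFourier f y - invFourier f (y + ζ) =
      ∫ η : ℝ, (1 - Complex.exp (Complex.I * η * ζ)) * f η *
        Complex.exp (Complex.I * (η * y : ℝ)) := by
  rw [invFourier, invFourier,
    ← integral_sub (integrable_mul_exp hf y) (integrable_mul_exp hf (y + ζ))]
  refine integral_congr_ae (.of_forall fun η ↦ ?_)
  have hexp : Complex.exp (Complex.I * (η * (y + ζ) : ℝ)) =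
      Complex.exp (Complex.I * η * ζ) * Complex.exp (Complex.I * (η * y : ℝ)) := by
    rw [← Complex.exp_add]
    push_cast
    ring_nf
  simp only [hexp]
  ring

theorem exists_schwartzMap_dilate {F : Type*} [NormedAddCommGroup F] [NormedSpace ℝ F]
    (f : 𝓢(ℝ, F)) {c : ℝ} (hc : c ≠ 0) : ∃ g : 𝓢(ℝ, F), ∀ x, g x = f (c * x) :=
  ⟨SchwartzMap.compCLMOfContinuousLinearEquiv ℝ
    (ContinuousLinearEquiv.unitsEquivAut ℝ (Units.mk0 c hc)) f, fun x ↦ congrArg f (mul_comm x c)⟩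

lemma integrable_mul_schwartzMap_comp_div (f : 𝓢(ℝ, ℂ)) {R : ℝ} (hR : R ≠ 0) :
    Integrable fun η : ℝ ↦ (η : ℂ) * f (η / R) := by
  have hf : Integrable fun η : ℝ ↦ (η : ℂ) * f η := by
    refine (integrable_norm_iff (by fun_prop)).1 ?_
    simpa only [norm_mul, Complex.norm_real, pow_one] using f.integrable_pow_mul volume 1
  have hdilate (η : ℝ) : (η : ℂ) * f (η / R) = R * ((η / R : ℝ) * f (η / R)) := by
    rw [← mul_assoc, ← Complex.ofReal_mul, mul_div_cancel₀ η hR]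
  simp only [hdilate]
  exact (hf.comp_div hR).const_mul _

theorem exists_schwartzMap_invFourier (f : 𝓢(ℝ, ℂ)) : ∃ Q : 𝓢(ℝ, ℂ), ∀ y, Q y = invFourier f y := by
  obtain ⟨Q, hQ⟩ := exists_schwartzMap_dilate (𝓕⁻ f) (c := (2 * π)⁻¹) (by positivity)
  exact ⟨Q, fun y ↦ by rw [hQ, invFourier_eq_fourierInv, SchwartzMap.fourierInv_coe]⟩

theorem integrable_invFourier_dilate (f : 𝓢(ℝ, ℂ)) {R : ℝ} (hR : 0 < R) :
    Integrable (invFourier fun η ↦ f (η / R)) := by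
  obtain ⟨Q, hQ⟩ := exists_schwartzMap_invFourier f
  simp only [funext fun y ↦ invFourier_comp_div f hR y, ← hQ]
  exact (Q.integrable.comp_mul_left' hR.ne').const_mul _

theorem exists_eLpNorm_one_invFourier_dilate_sub_translate_le (f : 𝓢(ℝ, ℂ)) :
    ∃ K > 0, ∀ R > 0, ∀ ζ, eLpNorm (fun y ↦ invFourier (fun η ↦ f (η / R)) y -
      invFourier (fun η ↦ f (η / R)) (y + ζ)) 1 volume ≤
        ENNReal.ofReal (K * min 1 (R * |ζ|)) := by
  obtain ⟨Q, hQ⟩ := exists_schwartzMap_invFourier f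
  obtain ⟨K, hK, hbound⟩ := exists_eLpNorm_one_sub_translate_le_min (μ := volume) Q
  refine ⟨K, hK, fun R hR ζ ↦ ?_⟩
  have hdilate (y : ℝ) : invFourier (fun η ↦ f (η / R)) y -
      invFourier (fun η ↦ f (η / R)) (y + ζ) = (R : ℂ) * (Q (R * y) - Q (R * y + R * ζ)) := by
    simp only [invFourier_comp_div f hR, hQ, mul_add, mul_sub]
  calc
    eLpNorm (fun y ↦ invFourier (fun η ↦ f (η / R)) y -
        invFourier (fun η ↦ f (η / R)) (y + ζ)) 1 volume
      = eLpNorm (fun y ↦ R • (Q (R * y) - Q (R * y + R * ζ))) 1 volume := by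
      simp only [hdilate, Complex.real_smul]
    _ = eLpNorm (fun u ↦ Q u - Q (u + R * ζ)) 1 volume :=
      eLpNorm_one_smul_comp_mul_left (fun u ↦ Q u - Q (u + R * ζ)) hR.ne'
    _ ≤ ENNReal.ofReal (K * min 1 (R * |ζ|)) := by
      simpa only [norm_mul, norm_eq_abs, abs_of_pos hR] using hbound (R * ζ)

end InvFourier

/-! ### Superpositions of tensor products of differences -/

section DifferenceSymbol

variable {ι : Type*} [Fintype ι]

/-- The superposition `∫ ∏_j (1 - e^{iη_jζ}) w(ζ) dζ` of tensor products of difference symbols;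
`T_n` is the case `w(ζ) = |ζ|^{α-1} sgn(ζ) / ζ^{2n+1}`. -/
def differenceSymbol (w : ℝ → ℂ) (η : ι → ℝ) : ℂ :=
  ∫ ζ : ℝ, (∏ j, (1 - Complex.exp (Complex.I * (η j : ℝ) * ζ))) * w ζ

/-- The inverse Fourier transform on `ℝ^ι`, in the normalisation of `invFourier`. -/
def invFourierPi (m : (ι → ℝ) → ℂ) (y : ι → ℝ) : ℂ :=
  ∫ η : ι → ℝ, m η * Complex.exp (Complex.I * (∑ i, η i * y i : ℝ))

lemma norm_one_sub_exp_le (η ζ : ℝ) :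
    ‖1 - Complex.exp (Complex.I * η * ζ)‖ ≤ min 1 |ζ| * (2 + |η|) := by
  have hphase : Complex.I * η * ζ = Complex.I * (η * ζ : ℝ) := by push_cast; ring
  rw [hphase, norm_sub_rev]
  rcases le_total 1 |ζ| with hζ | hζ
  · calc
      ‖Complex.exp (Complex.I * (η * ζ : ℝ)) - 1‖ ≤ 1 + 1 := by
        simpa only [Complex.norm_exp_I_mul_ofReal, norm_one] using
          norm_sub_le (Complex.exp (Complex.I * (η * ζ : ℝ))) 1
      _ ≤ min 1 |ζ| * (2 + |η|) := by
        rw [min_eq_left hζ]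
        linarith [abs_nonneg η]
  · calc
      ‖Complex.exp (Complex.I * (η * ζ : ℝ)) - 1‖ ≤ |ζ| * |η| := by
        simpa only [norm_eq_abs, abs_mul, mul_comm |η|] using
          Real.norm_exp_I_mul_ofReal_sub_one_le (x := η * ζ)
      _ ≤ min 1 |ζ| * (2 + |η|) := by
        rw [min_eq_right hζ]
        gcongr
        linarith

variable {w : ℝ → ℂ} {f : ι → ℝ → ℂ}

lemma integrable_differenceSymbol_integrand (hw : AEStronglyMeasurable w)
    (hwi : Integrable fun ζ ↦ ‖w ζ‖ * min 1 |ζ| ^ Fintype.card ι) (hf : ∀ i, Integrable (f i))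
    (hηf : ∀ i, Integrable fun η : ℝ ↦ (η : ℂ) * f i η) (y : ι → ℝ) :
    Integrable (fun p : (ι → ℝ) × ℝ ↦ w p.2 *
      ∏ i, ((1 - Complex.exp (Complex.I * (p.1 i : ℝ) * p.2)) * f i (p.1 i) *
        Complex.exp (Complex.I * (p.1 i * y i : ℝ)))) (volume.prod volume) := by
  have hdom : Integrable (fun p : (ι → ℝ) × ℝ ↦ (∏ i, (2 + |p.1 i|) * ‖f i (p.1 i)‖) *
      (‖w p.2‖ * min 1 |p.2| ^ Fintype.card ι)) (volume.prod volume) := by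
    refine Integrable.mul_prod (Integrable.fintype_prod
      (f := fun i (x : ℝ) ↦ (2 + |x|) * ‖f i x‖) fun i ↦ ?_) hwi
    simpa only [add_mul, Pi.add_def, norm_mul, Complex.norm_real, norm_eq_abs] using
      ((hf i).norm.const_mul 2).add (hηf i).norm
  refine hdom.mono' ?_ (.of_forall fun p ↦ ?_)
  · have hfi (i : ι) : AEStronglyMeasurable (fun p : (ι → ℝ) × ℝ ↦ f i (p.1 i))
        (volume.prod volume) :=
      (hf i).1.comp_quasiMeasurePreserving
        ((Measure.quasiMeasurePreserving_eval _ i).comp Measure.quasiMeasurePreserving_fst)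
    refine hw.comp_snd.mul (Finset.aestronglyMeasurable_fun_prod _ fun i _ ↦ ?_)
    exact ((by fun_prop : AEStronglyMeasurable _ _).mul (hfi i)).mul (by fun_prop)
  · calc
      _ = ‖w p.2‖ * ∏ i, ‖1 - Complex.exp (Complex.I * (p.1 i : ℝ) * p.2)‖ * ‖f i (p.1 i)‖ := by
        simp only [norm_mul, norm_prod, Complex.norm_exp_I_mul_ofReal, mul_one]
      _ ≤ ‖w p.2‖ * ∏ i, min 1 |p.2| * (2 + |p.1 i|) * ‖f i (p.1 i)‖ := by
        gcongr with i
        exact norm_one_sub_exp_le _ _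
      _ = _ := by
        simp only [mul_assoc, Finset.prod_mul_distrib, Finset.prod_const, Finset.card_univ]
        ring

theorem invFourierPi_differenceSymbol_mul_prod (hw : AEStronglyMeasurable w)
    (hwi : Integrable fun ζ ↦ ‖w ζ‖ * min 1 |ζ| ^ Fintype.card ι) (hf : ∀ i, Integrable (f i))
    (hηf : ∀ i, Integrable fun η : ℝ ↦ (η : ℂ) * f i η) (y : ι → ℝ) :
    invFourierPi (fun η ↦ differenceSymbol w η * ∏ i, f i (η i)) y =
      ∫ ζ : ℝ, w ζ * ∏ i, (invFourier (f i) (y i) - invFourier (f i) (y i + ζ)) := by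
  have htensor (η : ι → ℝ) :
      differenceSymbol w η * (∏ i, f i (η i)) * Complex.exp (Complex.I * (∑ i, η i * y i : ℝ)) =
        ∫ ζ : ℝ, w ζ * ∏ i, ((1 - Complex.exp (Complex.I * (η i : ℝ) * ζ)) * f i (η i) *
          Complex.exp (Complex.I * (η i * y i : ℝ))) := by
    rw [differenceSymbol, ← integral_mul_const, ← integral_mul_const]
    refine integral_congr_ae (.of_forall fun ζ ↦ ?_)
    simp only [Complex.ofReal_sum, Finset.mul_sum, Complex.exp_sum, Finset.prod_mul_distrib]
    ring
  calc
    _ = ∫ η : ι → ℝ, ∫ ζ : ℝ, w ζ *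
          ∏ i, ((1 - Complex.exp (Complex.I * (η i : ℝ) * ζ)) * f i (η i) *
            Complex.exp (Complex.I * (η i * y i : ℝ))) := by
      simp only [invFourierPi, htensor]
    _ = ∫ ζ : ℝ, ∫ η : ι → ℝ, w ζ *
          ∏ i, ((1 - Complex.exp (Complex.I * (η i : ℝ) * ζ)) * f i (η i) *
            Complex.exp (Complex.I * (η i * y i : ℝ))) :=
      integral_integral_swap (integrable_differenceSymbol_integrand hw hwi hf hηf y)
    _ = ∫ ζ : ℝ, w ζ * ∏ i, (invFourier (f i) (y i) - invFourier (f i) (y i + ζ)) :=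
      integral_congr_ae (.of_forall fun ζ ↦ by
        simp only [integral_const_mul, invFourier_sub_invFourier_add (hf _)]
        rw [← integral_fintype_prod_volume_eq_prod fun i (x : ℝ) ↦
          (1 - Complex.exp (Complex.I * x * ζ)) * f i x * Complex.exp (Complex.I * (x * y i : ℝ))])

theorem eLpNorm_one_invFourierPi_differenceSymbol_mul_prod_le (hw : AEStronglyMeasurable w)
    (hwi : Integrable fun ζ ↦ ‖w ζ‖ * min 1 |ζ| ^ Fintype.card ι) (hf : ∀ i, Integrable (f i))
    (hηf : ∀ i, Integrable fun η : ℝ ↦ (η : ℂ) * f i η) (hF : ∀ i, Integrable (invFourier (f i))) :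
    eLpNorm (invFourierPi fun η ↦ differenceSymbol w η * ∏ i, f i (η i)) 1 volume ≤
      ∫⁻ ζ, ‖w ζ‖ₑ *
        ∏ i, eLpNorm (fun y ↦ invFourier (f i) y - invFourier (f i) (y + ζ)) 1 volume := by
  have hcont (i : ι) : Continuous (invFourier (f i)) := continuous_invFourier (hf i)
  have hmeas : AEStronglyMeasurable (Function.uncurry fun (y : ι → ℝ) (ζ : ℝ) ↦
      w ζ * ∏ i, (invFourier (f i) (y i) - invFourier (f i) (y i + ζ)))
      (volume.prod volume) :=
    hw.comp_snd.mul (Continuous.aestronglyMeasurable (by fun_prop))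
  calc
    _ = eLpNorm (fun y : ι → ℝ ↦
          ∫ ζ : ℝ, w ζ * ∏ i, (invFourier (f i) (y i) - invFourier (f i) (y i + ζ))) 1 volume :=
      congrArg (eLpNorm · 1 volume)
        (funext (invFourierPi_differenceSymbol_mul_prod hw hwi hf hηf))
    _ ≤ ∫⁻ ζ, eLpNorm (fun y : ι → ℝ ↦
          w ζ * ∏ i, (invFourier (f i) (y i) - invFourier (f i) (y i + ζ))) 1 volume :=
      eLpNorm_one_integral_le hmeas
    _ = _ := lintegral_congr fun ζ ↦ by
      rw [volume_pi, ← eLpNorm_one_fintype_prod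
        (f := fun i x ↦ invFourier (f i) x - invFourier (f i) (x + ζ))
        fun i ↦ (hF i).sub ((hF i).comp_add_right ζ)]
      exact eLpNorm_const_smul (w ζ) _ _ _

lemma integrable_norm_mul_min_one_pow {β γ : ℝ} (hβ₂ : -2 < β) (hβ₁ : β < -1)
    (hw : AEStronglyMeasurable w) (hwb : ∀ᵐ ζ, ‖w ζ‖ ≤ |ζ| ^ γ) {s : Finset ι} {b : ι} (hb : b ∉ s)
    (hs : γ + s.card = β) :
    Integrable fun ζ ↦ ‖w ζ‖ * min 1 |ζ| ^ Fintype.card ι := by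
  obtain rfl : γ = β - s.card := eq_sub_of_add_eq hs
  refine (integrable_abs_rpow_mul_prod_min_one (fun _ ↦ zero_lt_one) hb hβ₂ hβ₁).mono'
    (hw.norm.mul (by fun_prop)) ?_
  filter_upwards [hwb] with ζ hζ
  simp only [one_mul, Finset.prod_const, Finset.card_univ]
  rw [norm_of_nonneg (by positivity)]
  gcongr

theorem exists_eLpNorm_one_invFourierPi_differenceSymbol_dilate_le {β γ : ℝ} (hβ₂ : -2 < β)
    (hβ₁ : β < -1) (hw : AEStronglyMeasurable w) (hwb : ∀ᵐ ζ, ‖w ζ‖ ≤ |ζ| ^ γ)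
    (g : ι → 𝓢(ℝ, ℂ)) :
    ∃ C > 0, ∀ R : ι → ℝ, (∀ i, 0 < R i) → ∀ (s : Finset ι) (b : ι), b ∉ s → γ + s.card = β →
      eLpNorm (invFourierPi fun η ↦ differenceSymbol w η * ∏ i, g i (η i / R i)) 1 volume ≤
        ENNReal.ofReal (C * (R b ^ (-β - 1) * ∏ i ∈ s, R i)) := by
  choose K hK hKbound using fun i ↦ exists_eLpNorm_one_invFourier_dilate_sub_translate_le (g i)
  set I := ∫ u : ℝ, min 1 |u| * |u| ^ β
  have hI : 0 < I := integral_min_one_mul_abs_rpow_pos hβ₂ hβ₁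
  have hKprod : 0 < ∏ i, K i := Finset.prod_pos fun i _ ↦ hK i
  refine ⟨(∏ i, K i) * I, mul_pos hKprod hI, fun R hR s b hb hs ↦ ?_⟩
  have hwi := integrable_norm_mul_min_one_pow hβ₂ hβ₁ hw hwb hb hs
  obtain rfl : γ = β - s.card := eq_sub_of_add_eq hs
  have hmin (ζ : ℝ) (i : ι) : 0 ≤ min 1 (R i * |ζ|) :=
    le_min zero_le_one (mul_nonneg (hR i).le (abs_nonneg ζ))
  calc
    _ ≤ ∫⁻ ζ, ‖w ζ‖ₑ * ∏ i, eLpNorm (fun y ↦ invFourier (fun η ↦ g i (η / R i)) y -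
          invFourier (fun η ↦ g i (η / R i)) (y + ζ)) 1 volume :=
      eLpNorm_one_invFourierPi_differenceSymbol_mul_prod_le hw hwi
        (fun i ↦ (g i).integrable.comp_div (hR i).ne')
        (fun i ↦ integrable_mul_schwartzMap_comp_div (g i) (hR i).ne')
        fun i ↦ integrable_invFourier_dilate (g i) (hR i)
    _ ≤ ∫⁻ ζ, ENNReal.ofReal
          ((∏ i, K i) * (|ζ| ^ (β - s.card) * ∏ i, min 1 (R i * |ζ|))) := by
      refine lintegral_mono_ae ?_
      filter_upwards [hwb] with ζ hζ
      rw [mul_left_comm, ← Finset.prod_mul_distrib, ENNReal.ofReal_mul (by positivity),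
        ENNReal.ofReal_prod_of_nonneg fun i _ ↦ mul_nonneg (hK i).le (hmin ζ i)]
      gcongr with i
      · rw [← ofReal_norm]
        exact ENNReal.ofReal_le_ofReal hζ
      · exact hKbound i _ (hR i) ζ
    _ = ENNReal.ofReal
          ((∏ i, K i) * ∫ ζ : ℝ, |ζ| ^ (β - s.card) * ∏ i, min 1 (R i * |ζ|)) := by
      rw [← integral_const_mul, ofReal_integral_eq_lintegral_ofReal
        ((integrable_abs_rpow_mul_prod_min_one hR hb hβ₂ hβ₁).const_mul _)
        (.of_forall fun ζ ↦ mul_nonneg hKprod.le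
          (mul_nonneg (by positivity) (Finset.prod_nonneg fun i _ ↦ hmin ζ i)))]
    _ ≤ ENNReal.ofReal ((∏ i, K i) * I * (R b ^ (-β - 1) * ∏ i ∈ s, R i)) := by
      rw [mul_assoc, mul_comm I]
      gcongr
      exact integral_abs_rpow_mul_prod_min_one_le hR hb hβ₂ hβ₁

end DifferenceSymbol

/-! ### The symbol `T_n` and the Littlewood–Paley pieces -/

/-- The weight `ζ^{-(2n+1)} |ζ|^{α-1} sgn ζ` in the definition of `T_n`. -/
def tnWeight (α : ℝ) (n : ℕ) (ζ : ℝ) : ℝ :=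
  |ζ| ^ (α - 1) * Real.sign ζ / ζ ^ (2 * n + 1)

lemma Tn_eq_differenceSymbol (α : ℝ) (n : ℕ) :
    Tn α n = differenceSymbol fun ζ ↦ (tnWeight α n ζ : ℂ) :=
  rfl

lemma measurable_tnWeight (α : ℝ) (n : ℕ) : Measurable (tnWeight α n) := by
  have hsign : Measurable Real.sign :=
    Measurable.ite measurableSet_Iio measurable_const
      (Measurable.ite measurableSet_Ioi measurable_const measurable_const)
  unfold tnWeight
  fun_prop

lemma abs_tnWeight (α : ℝ) (n : ℕ) {ζ : ℝ} (hζ : ζ ≠ 0) :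
    |tnWeight α n ζ| = |ζ| ^ (α - 1 - (2 * n + 1 : ℕ)) := by
  have hsign : |Real.sign ζ| = 1 := by
    rcases Real.sign_apply_eq_of_ne_zero ζ hζ with h | h <;> simp [h]
  rw [tnWeight, abs_div, abs_mul, hsign, mul_one, abs_pow, abs_of_nonneg (by positivity),
    rpow_sub_natCast (abs_ne_zero.2 hζ)]

lemma lpSymb_eq_sub_comp_two_mul (ψ : ℝ → ℝ) (k : ℤ) (ξ : ℝ) :
    lpSymb ψ k ξ = ψ (ξ / 2 ^ k) - ψ (2 * (ξ / 2 ^ k)) := by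
  rw [lpSymb, zpow_sub_one₀ two_ne_zero, div_mul_eq_div_div, div_inv_eq_mul, mul_comm 2]

theorem exists_schwartzMap_lpSymb (ψ : 𝓢(ℝ, ℝ)) :
    ∃ g : 𝓢(ℝ, ℂ), ∀ (k : ℤ) (ξ : ℝ), g (ξ / 2 ^ k) = lpSymb ψ k ξ := by
  obtain ⟨ψ₂, hψ₂⟩ := exists_schwartzMap_dilate ψ two_ne_zero
  refine ⟨(ψ - ψ₂).postcompCLM Complex.ofRealCLM, fun k ξ ↦ ?_⟩
  rw [SchwartzMap.postcompCLM_apply, sub_apply, hψ₂, lpSymb_eq_sub_comp_two_mul]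
  rfl

lemma rpow_mul_prod_zpow {ι : Type*} {c : ℝ} (hc : 0 < c) (a : ℝ) (j : ι → ℤ) (b : ι)
    (s : Finset ι) :
    (c ^ j b) ^ a * ∏ i ∈ s, c ^ j i = c ^ (a * j b + ∑ i ∈ s, (j i : ℝ)) := by
  rw [rpow_add hc, rpow_sum_of_pos hc, mul_comm a, rpow_mul hc.le]
  simp only [rpow_intCast]

lemma sum_filter_two_le_comp_perm {M : Type*} [AddCommMonoid M] {m : ℕ} {a b : Fin m}
    (ha : (a : ℕ) = 0) (hb : (b : ℕ) = 1) (σ : Equiv.Perm (Fin m)) (f : Fin m → M) :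
    ∑ i ∈ Finset.univ.filter (fun i : Fin m ↦ 2 ≤ (i : ℕ)), f (σ i) = ∑ i ∈ {σ a, σ b}ᶜ, f i := by
  refine Finset.sum_equiv σ (fun i ↦ ?_) fun _ _ ↦ rfl
  simp only [Finset.mem_filter_univ, Finset.mem_compl, Finset.mem_insert, Finset.mem_singleton,
    σ.apply_eq_iff_eq, Fin.ext_iff, ha, hb]
  omega

theorem Tn_localized_L1_bound_general (α : ℝ) (hα1 : 1 < α) (hα2 : α < 2) (ψ : 𝓢(ℝ, ℝ)) (n : ℕ) :
    ∃ C > (0 : ℝ), ∀ (j : Fin (2 * n + 1) → ℤ) (a b : Fin (2 * n + 1)), a ≠ b →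
      eLpNorm
          (fun y : Fin (2 * n + 1) → ℝ ↦
            ∫ η : Fin (2 * n + 1) → ℝ,
              Tn α n η * ((∏ i, lpSymb ψ (j i) (η i) : ℝ) : ℂ)
                * Complex.exp (Complex.I * (∑ i, η i * y i : ℝ))) 1 volume
        ≤ ENNReal.ofReal (C * (2 : ℝ) ^ ((2 - α) * j b + ∑ i ∈ {a, b}ᶜ, (j i : ℝ))) := by
  obtain ⟨g, hg⟩ := exists_schwartzMap_lpSymb ψ
  have hweight : ∀ᵐ ζ : ℝ, ‖(tnWeight α n ζ : ℂ)‖ ≤ |ζ| ^ (α - 1 - (2 * n + 1 : ℕ)) := by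
    filter_upwards [Measure.ae_ne volume (0 : ℝ)] with ζ hζ
    rw [Complex.norm_real, norm_eq_abs, abs_tnWeight α n hζ]
  obtain ⟨C, hC, hbound⟩ := exists_eLpNorm_one_invFourierPi_differenceSymbol_dilate_le
    (β := α - 3) (by linarith) (by linarith)
    (measurable_tnWeight α n).complex_ofReal.aestronglyMeasurable hweight
    fun _ : Fin (2 * n + 1) ↦ g
  refine ⟨C, hC, fun j a b hab ↦ ?_⟩
  have hcard : (({a, b}ᶜ : Finset (Fin (2 * n + 1))).card : ℝ) + 2 = (2 * n + 1 : ℕ) := by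
    have hcompl := Finset.card_compl_add_card ({a, b} : Finset (Fin (2 * n + 1)))
    rw [Finset.card_pair hab, Fintype.card_fin] at hcompl
    exact_mod_cast hcompl
  have hmain := hbound (fun i ↦ 2 ^ j i) (fun i ↦ by positivity) {a, b}ᶜ b (by simp)
    (by linarith)
  have hexp : -(α - 3) - 1 = 2 - α := by ring
  unfold invFourierPi at hmain
  simpa only [hg, hexp, rpow_mul_prod_zpow two_pos, ← Tn_eq_differenceSymbol,
    Complex.ofReal_prod] using hmain

/-- **`L¹` bound for the dyadically localized `T_n`.** If `ℓ` is the decreasing rearrangement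
of `(j₁,…,j_{2n+1})`, then
`‖F^{-1}[T_n ψ_{j₁}(η₁)⋯ψ_{j_{2n+1}}(η_{2n+1})]‖_{L¹(ℝ^{2n+1})}
  ≤ C(n,α) 2^{(2-α)ℓ₂ + ℓ₃ + ⋯ + ℓ_{2n+1}}`. -/
theorem Tn_localized_L1_bound (α : ℝ) (hα1 : 1 < α) (hα2 : α < 2)
    (ψ : ℝ → ℝ) (hψsm : ContDiff ℝ (⊤ : ℕ∞) ψ)
    (hψrange : ∀ ξ, ψ ξ ∈ Set.Icc (0 : ℝ) 1)
    (hψsupp : ∀ ξ, ψ ξ ≠ 0 → |ξ| ≤ 8 / 5)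
    (hψone : ∀ ξ, |ξ| ≤ 5 / 4 → ψ ξ = 1)
    (n : ℕ) (hn : 1 ≤ n) :
    ∃ C > (0 : ℝ),
      ∀ j ℓ : Fin (2 * n + 1) → ℤ,
        (∀ i i' : Fin (2 * n + 1), i ≤ i' → ℓ i' ≤ ℓ i) →
        (∃ σ : Equiv.Perm (Fin (2 * n + 1)), ∀ i, ℓ i = j (σ i)) →
        eLpNorm
            (fun y : Fin (2 * n + 1) → ℝ =>
              ∫ η : Fin (2 * n + 1) → ℝ,
                Tn α n η * ((∏ i, lpSymb ψ (j i) (η i) : ℝ) : ℂ)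
                  * Complex.exp (Complex.I * (∑ i, η i * y i : ℝ))) 1 volume
          ≤ ENNReal.ofReal
              (C * (2 : ℝ) ^
                ((2 - α) * ((ℓ ⟨1, by omega⟩ : ℤ) : ℝ)
                  + ∑ i ∈ Finset.univ.filter (fun i : Fin (2 * n + 1) => 2 ≤ (i : ℕ)),
                      ((ℓ i : ℤ) : ℝ))) := by
  have hψc : HasCompactSupport ψ :=
    HasCompactSupport.intro (isCompact_closedBall 0 (8 / 5)) fun ξ hξ ↦ by
      by_contra h
      exact hξ (by simpa using hψsupp ξ h)
  obtain ⟨C, hC, hbound⟩ := Tn_localized_L1_bound_general α hα1 hα2 (hψc.toSchwartzMap hψsm) n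
  refine ⟨C, hC, fun j ℓ _ ⟨σ, hσ⟩ ↦ ?_⟩
  simp only [hσ]
  rw [sum_filter_two_le_comp_perm (a := 0) (b := ⟨1, by omega⟩) rfl rfl σ fun i ↦ (j i : ℝ)]
  exact hbound j _ _ (σ.injective.ne (Fin.ne_of_val_ne zero_ne_one))
end
end

section
/- Let α ∈ (1,2). For every c ∈ ℝ, ∫₀^∞ [ (s² + 1)^{−(2−α)/2} − (s² + c²)^{−(2−α)/2} ] ds = ( √π Γ((1−α)/2) / (2 Γ(1 − α/2)) ) (1 − |c|^{α−1}), the integral being absolutely convergent. -/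
open MeasureTheory Real

noncomputable section

/-! For `p > 1/2` and `u > 0`, inserting `Γ(p) x^{-p} = ∫₀^∞ t^{p-1} e^{-tx} dt` and integrating the
Gaussian in `s` first gives

`∫₀^∞ (s²+u)^{-p} ds = (√π Γ(p-1/2) / (2Γ(p))) u^{1/2-p}`.

The regularised integral `∫₀^∞ [(s²+a)^{-β} - (s²+b)^{-β}] ds` obeys the law that subtracting two
such formulas with `p = β` would suggest, although each term diverges for `β ≤ 1/2`: since
`(s²+a)^{-β} - (s²+b)^{-β} = β ∫ₐᵇ (s²+u)^{-(β+1)} du`, Tonelli's theorem and the formula with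
`p = β + 1` turn it into a multiple of `∫ₐᵇ u^{-β-1/2} du`. The resulting constant is the
expected one because `Γ(x+1) = x Γ(x)`. -/

lemma integrable_prod_of_nonneg {X Y : Type*} [MeasurableSpace X] [MeasurableSpace Y]
    {μ : Measure X} {ν : Measure Y} [SFinite ν] {f : X × Y → ℝ}
    (hf : AEStronglyMeasurable f (μ.prod ν)) (hf_nonneg : ∀ᵐ x ∂μ, ∀ᵐ y ∂ν, 0 ≤ f (x, y))
    (hf_inner : ∀ᵐ x ∂μ, Integrable (fun y ↦ f (x, y)) ν)
    (hf_outer : Integrable (fun x ↦ ∫ y, f (x, y) ∂ν) μ) :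
    Integrable f (μ.prod ν) := by
  refine (integrable_prod_iff hf).2 ⟨hf_inner, hf_outer.congr ?_⟩
  filter_upwards [hf_nonneg] with x hx
  refine integral_congr_ae ?_
  filter_upwards [hx] with y hy
  exact (norm_of_nonneg hy).symm

lemma integral_rpow_mul_exp_neg_mul_sq_add {p t : ℝ} (u : ℝ) (ht : 0 < t) :
    ∫ s in Set.Ioi (0 : ℝ), t ^ (p - 1) * exp (-((s ^ 2 + u) * t)) =
      √π / 2 * (t ^ (p - 1 / 2 - 1) * exp (-(u * t))) := by
  have split_exp (s : ℝ) : t ^ (p - 1) * exp (-((s ^ 2 + u) * t)) =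
      t ^ (p - 1) * exp (-(u * t)) * exp (-t * s ^ 2) := by
    rw [mul_assoc, ← exp_add]
    ring_nf
  simp only [split_exp]
  rw [integral_const_mul, integral_gaussian_Ioi, sqrt_div pi_pos.le,
    show p - 1 / 2 - 1 = p - 1 - 1 / 2 by ring, rpow_sub ht (p - 1), ← sqrt_eq_rpow]
  ring

lemma integrable_rpow_mul_exp_neg_mul_sq_add {p u : ℝ} (hp : 1 / 2 < p) (hu : 0 < u) :
    Integrable (fun z : ℝ × ℝ ↦ z.1 ^ (p - 1) * exp (-((z.2 ^ 2 + u) * z.1)))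
      ((volume.restrict (Set.Ioi 0)).prod (volume.restrict (Set.Ioi 0))) := by
  refine integrable_prod_of_nonneg (by fun_prop) ?_ ?_ ?_
  · filter_upwards [ae_restrict_mem measurableSet_Ioi] with t (ht : 0 < t)
    exact ae_of_all _ fun s ↦ by positivity
  · filter_upwards [ae_restrict_mem measurableSet_Ioi] with t (ht : 0 < t)
    refine .of_integral_ne_zero ?_
    rw [integral_rpow_mul_exp_neg_mul_sq_add u ht]
    positivity
  · have gamma_integrand : IntegrableOn
        (fun t : ℝ ↦ t ^ (p - 1 / 2 - 1) * exp (-(u * t))) (Set.Ioi 0) := by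
      simpa using integrableOn_rpow_mul_exp_neg_mul_rpow (s := p - 1 / 2 - 1)
        (by linarith) one_pos hu
    refine (gamma_integrand.const_mul (√π / 2)).congr ?_
    filter_upwards [ae_restrict_mem measurableSet_Ioi] with t ht
    exact (integral_rpow_mul_exp_neg_mul_sq_add u ht).symm

lemma integral_rpow_mul_exp_neg_mul_Ioi_eq_Gamma_mul {p r : ℝ} (hp : 0 < p) (hr : 0 < r) :
    ∫ t in Set.Ioi (0 : ℝ), t ^ (p - 1) * exp (-(r * t)) = Gamma p * r ^ (-p) := by
  rw [integral_rpow_mul_exp_neg_mul_Ioi hp hr, one_div, inv_rpow hr.le, ← rpow_neg hr.le, mul_comm]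

lemma integral_sq_add_rpow_neg {p u : ℝ} (hp : 1 / 2 < p) (hu : 0 < u) :
    ∫ s in Set.Ioi (0 : ℝ), (s ^ 2 + u) ^ (-p) =
      √π * Gamma (p - 1 / 2) / (2 * Gamma p) * u ^ (1 / 2 - p) := by
  have hp₀ : 0 < p := by linarith
  have hΓ : Gamma p ≠ 0 := (Gamma_pos_of_pos hp₀).ne'
  have key : Gamma p * ∫ s in Set.Ioi (0 : ℝ), (s ^ 2 + u) ^ (-p) =
      √π / 2 * (Gamma (p - 1 / 2) * u ^ (1 / 2 - p)) := calc
    _ = ∫ s in Set.Ioi (0 : ℝ), ∫ t in Set.Ioi (0 : ℝ),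
          t ^ (p - 1) * exp (-((s ^ 2 + u) * t)) := by
      rw [← integral_const_mul]
      congr! with -
      exact (integral_rpow_mul_exp_neg_mul_Ioi_eq_Gamma_mul hp₀ (by positivity)).symm
    _ = ∫ t in Set.Ioi (0 : ℝ), ∫ s in Set.Ioi (0 : ℝ),
          t ^ (p - 1) * exp (-((s ^ 2 + u) * t)) :=
      (integral_integral_swap (integrable_rpow_mul_exp_neg_mul_sq_add hp hu)).symm
    _ = ∫ t in Set.Ioi (0 : ℝ), √π / 2 * (t ^ (p - 1 / 2 - 1) * exp (-(u * t))) :=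
      setIntegral_congr_fun measurableSet_Ioi fun _ ht ↦ integral_rpow_mul_exp_neg_mul_sq_add u ht
    _ = √π / 2 * (Gamma (p - 1 / 2) * u ^ (1 / 2 - p)) := by
      rw [integral_const_mul, integral_rpow_mul_exp_neg_mul_Ioi_eq_Gamma_mul (by linarith) hu,
        neg_sub]
  rw [← mul_right_inj' hΓ, key]
  field_simp

lemma integrableOn_sq_add_rpow_neg {p u : ℝ} (hp : 1 / 2 < p) (hu : 0 < u) :
    IntegrableOn (fun s : ℝ ↦ (s ^ 2 + u) ^ (-p)) (Set.Ioi 0) := by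
  refine .of_integral_ne_zero ?_
  have : 0 < Gamma (p - 1 / 2) := Gamma_pos_of_pos (by linarith)
  have : 0 < Gamma p := Gamma_pos_of_pos (by linarith)
  rw [integral_sq_add_rpow_neg hp hu]
  positivity

lemma add_rpow_neg_sub_eq_integral {β x a b : ℝ} (ha : 0 < x + a) (hb : 0 < x + b) :
    (x + a) ^ (-β) - (x + b) ^ (-β) = β * ∫ u in a..b, (x + u) ^ (-(β + 1)) := by
  rcases eq_or_ne β 0 with rfl | hβ
  · simp
  rw [intervalIntegral.integral_comp_add_left (fun y ↦ y ^ (-(β + 1))),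
    integral_rpow (Or.inr ⟨by simpa using hβ, Set.notMem_uIcc_of_lt ha hb⟩),
    show -(β + 1) + 1 = -β by ring]
  field_simp
  ring

lemma intervalIntegrable_rpow_of_lt_or_notMem {a b r : ℝ}
    (hr : -1 < r ∨ (0 : ℝ) ∉ Set.uIcc a b) :
    IntervalIntegrable (fun u : ℝ ↦ u ^ r) volume a b :=
  hr.elim intervalIntegral.intervalIntegrable_rpow' fun h ↦
    intervalIntegral.intervalIntegrable_rpow (Or.inr h)

lemma integrable_sq_add_rpow_neg_prod {p a b : ℝ} (hp : 1 / 2 < p) (ha : 0 ≤ a) (hb : 0 ≤ b)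
    (hab : p < 3 / 2 ∨ (0 : ℝ) ∉ Set.uIcc a b) :
    Integrable (fun z : ℝ × ℝ ↦ (z.2 ^ 2 + z.1) ^ (-p))
      ((volume.restrict (Set.uIoc a b)).prod (volume.restrict (Set.Ioi 0))) := by
  have ae_pos : ∀ᵐ u ∂volume.restrict (Set.uIoc a b), 0 < u := by
    filter_upwards [ae_restrict_mem measurableSet_uIoc] with u hu
    exact (le_min ha hb).trans_lt hu.1
  refine integrable_prod_of_nonneg
    (Measurable.pow_const (by fun_prop) _).aestronglyMeasurable ?_ ?_ ?_
  · filter_upwards [ae_pos] with u hu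
    exact ae_of_all _ fun s ↦ by positivity
  · filter_upwards [ae_pos] with u hu
    exact integrableOn_sq_add_rpow_neg hp hu
  · have hpow : IntervalIntegrable (fun u : ℝ ↦ u ^ (1 / 2 - p)) volume a b :=
      intervalIntegrable_rpow_of_lt_or_notMem (hab.imp_left fun h ↦ by linarith)
    refine ((intervalIntegrable_iff.1 hpow).const_mul
      (√π * Gamma (p - 1 / 2) / (2 * Gamma p))).congr ?_
    filter_upwards [ae_pos] with u hu
    exact (integral_sq_add_rpow_neg hp hu).symm

section SqAddRpowSub

variable {β a b : ℝ}

lemma integrableOn_sq_add_rpow_neg_sub (hβ : -(1 / 2) < β) (ha : 0 ≤ a) (hb : 0 ≤ b)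
    (hab : β < 1 / 2 ∨ (0 : ℝ) ∉ Set.uIcc a b) :
    IntegrableOn (fun s : ℝ ↦ (s ^ 2 + a) ^ (-β) - (s ^ 2 + b) ^ (-β)) (Set.Ioi 0) := by
  have inner_integrable := (integrable_sq_add_rpow_neg_prod (p := β + 1) (by linarith) ha hb
    (hab.imp_left fun h ↦ by linarith)).integral_prod_right
  refine ((inner_integrable.const_mul (if a ≤ b then 1 else -1)).const_mul β).congr ?_
  filter_upwards [ae_restrict_mem measurableSet_Ioi] with s (hs : 0 < s)
  rw [add_rpow_neg_sub_eq_integral (by positivity) (by positivity),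
    intervalIntegral.intervalIntegral_eq_integral_uIoc, smul_eq_mul]

lemma integral_sq_add_rpow_neg_sub (hβ : -(1 / 2) < β) (hβ₀ : β ≠ 0) (ha : 0 ≤ a) (hb : 0 ≤ b)
    (hab : β < 1 / 2 ∨ β ≠ 1 / 2 ∧ (0 : ℝ) ∉ Set.uIcc a b) :
    ∫ s in Set.Ioi (0 : ℝ), ((s ^ 2 + a) ^ (-β) - (s ^ 2 + b) ^ (-β)) =
      √π * Gamma (β - 1 / 2) / (2 * Gamma β) * (a ^ (1 / 2 - β) - b ^ (1 / 2 - β)) := by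
  have hβ₁ : β - 1 / 2 ≠ 0 := sub_ne_zero.2 (hab.elim ne_of_lt And.left)
  have hpow : ∫ u in a..b, u ^ (1 / 2 - (β + 1)) =
      (a ^ (1 / 2 - β) - b ^ (1 / 2 - β)) / (β - 1 / 2) := by
    rw [integral_rpow (hab.imp (fun h ↦ by linarith)
      (And.imp_left fun h h' ↦ h (by linarith))), show 1 / 2 - (β + 1) + 1 = 1 / 2 - β by ring,
      ← neg_sub β, div_neg, ← neg_div, neg_sub]
  calc
    _ = ∫ s in Set.Ioi (0 : ℝ), β * ∫ u in a..b, (s ^ 2 + u) ^ (-(β + 1)) :=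
      setIntegral_congr_fun measurableSet_Ioi fun s (hs : 0 < s) ↦
        add_rpow_neg_sub_eq_integral (by positivity) (by positivity)
    _ = β * ∫ u in a..b, ∫ s in Set.Ioi (0 : ℝ), (s ^ 2 + u) ^ (-(β + 1)) := by
      rw [integral_const_mul, intervalIntegral_integral_swap
        (integrable_sq_add_rpow_neg_prod (by linarith) ha hb
          (hab.imp (fun h ↦ by linarith) And.right))]
    _ = β * ∫ u in a..b,
          √π * Gamma (β + 1 - 1 / 2) / (2 * Gamma (β + 1)) * u ^ (1 / 2 - (β + 1)) := by
      congr 1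
      refine intervalIntegral.integral_congr_ae (ae_of_all _ fun u hu ↦ ?_)
      exact integral_sq_add_rpow_neg (by linarith) ((le_min ha hb).trans_lt hu.1)
    _ = √π * Gamma (β - 1 / 2) / (2 * Gamma β) * (a ^ (1 / 2 - β) - b ^ (1 / 2 - β)) := by
      rw [intervalIntegral.integral_const_mul, hpow, add_sub_right_comm, Gamma_add_one hβ₁,
        Gamma_add_one hβ₀]
      generalize β - 1 / 2 = γ at hβ₁ ⊢
      field_simp

end SqAddRpowSub

theorem gsqg_scale_identity_general {α a c : ℝ} (hα3 : α < 3) (hα2 : α ≠ 2)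
    (hα1 : 1 < α ∨ α ≠ 1 ∧ a ≠ 0 ∧ c ≠ 0) :
    IntegrableOn
      (fun s : ℝ ↦
        (s ^ 2 + a ^ 2) ^ (-((2 - α) / 2)) - (s ^ 2 + c ^ 2) ^ (-((2 - α) / 2)))
      (Set.Ioi 0) ∧
    ∫ s in Set.Ioi (0 : ℝ),
        ((s ^ 2 + a ^ 2) ^ (-((2 - α) / 2)) - (s ^ 2 + c ^ 2) ^ (-((2 - α) / 2))) =
      √π * Gamma ((1 - α) / 2) / (2 * Gamma (1 - α / 2)) * (|a| ^ (α - 1) - |c| ^ (α - 1)) := by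
  have hβ : -(1 / 2) < (2 - α) / 2 := by linarith
  have hβ₀ : (2 - α) / 2 ≠ 0 := div_ne_zero (sub_ne_zero.2 hα2.symm) two_ne_zero
  have hac : (2 - α) / 2 < 1 / 2 ∨
      (2 - α) / 2 ≠ 1 / 2 ∧ (0 : ℝ) ∉ Set.uIcc (a ^ 2) (c ^ 2) :=
    hα1.imp (fun h ↦ by linarith) fun ⟨h, ha, hc⟩ ↦
      ⟨fun h' ↦ h (by linarith), Set.notMem_uIcc_of_lt (by positivity) (by positivity)⟩
  have sq_rpow (x : ℝ) : (x ^ 2) ^ (1 / 2 - (2 - α) / 2) = |x| ^ (α - 1) := by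
    rw [← sq_abs, ← rpow_natCast_mul (abs_nonneg x)]
    congr 1
    push_cast
    ring
  refine ⟨integrableOn_sq_add_rpow_neg_sub hβ (sq_nonneg a) (sq_nonneg c)
    (hac.imp_right And.right), ?_⟩
  rw [integral_sq_add_rpow_neg_sub hβ hβ₀ (sq_nonneg a) (sq_nonneg c) hac, sq_rpow, sq_rpow,
    show (2 - α) / 2 - 1 / 2 = (1 - α) / 2 by ring, show (2 - α) / 2 = 1 - α / 2 by ring]

/-- For `1 < α < 2` and every `c ∈ ℝ`,
`∫₀^∞ [(s²+1)^{-(2-α)/2} - (s²+c²)^{-(2-α)/2}] ds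
  = (√π Γ((1-α)/2) / (2 Γ(1-α/2))) (1 - |c|^{α-1})`,
the integral being absolutely convergent. -/
theorem gsqg_scale_identity (α : ℝ) (hα1 : 1 < α) (hα2 : α < 2) (c : ℝ) :
    IntegrableOn
      (fun s : ℝ =>
        (s ^ 2 + 1) ^ (-((2 - α) / 2)) - (s ^ 2 + c ^ 2) ^ (-((2 - α) / 2)))
      (Set.Ioi 0) volume ∧
    (∫ s in Set.Ioi (0 : ℝ),
        ((s ^ 2 + 1) ^ (-((2 - α) / 2)) - (s ^ 2 + c ^ 2) ^ (-((2 - α) / 2))))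
      = Real.sqrt π * Real.Gamma ((1 - α) / 2) / (2 * Real.Gamma (1 - α / 2))
          * (1 - |c| ^ (α - 1)) := by
  simpa using
    gsqg_scale_identity_general (a := 1) (c := c) (by linarith) hα2.ne (Or.inl hα1)
end
end

section
/- Let α ∈ (1,2) and A = 2 sin(πα/2) Γ(α−1). For all η₁, η₂, η₃ ∈ ℝ, the absolutely convergent integral T₁(η₁,η₂,η₃) = ∫_ℝ (1 − e^{iη₁ζ})(1 − e^{iη₂ζ})(1 − e^{iη₃ζ}) ζ^{−3} |ζ|^{α−1} sgn(ζ) dζ equals (A / ((2−α)(3−α))) ( |η₁|^{3−α} + |η₂|^{3−α} + |η₃|^{3−α} + |η₁+η₂+η₃|^{3−α} − |η₁+η₂|^{3−α} − |η₁+η₃|^{3−α} − |η₂+η₃|^{3−α} ). -/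
open MeasureTheory Real

noncomputable section

/-!
The weight `|ζ|^{α-1} sgn ζ / ζ³` is `|ζ|^{-1-β}` with `β = 3 - α`, so the integrand takes conjugate
values at `ζ` and `-ζ` and only its real part contributes. Expanding `∏ⱼ (1 - e^{iηⱼζ})` over the
subsets `t` of the indices, and using `∑ₜ (-1)^{|t|} = 0`, this real part is the combination of the
kernels `(1 - cos (∑_{j ∈ t} ηⱼ) ζ) |ζ|^{-1-β}` with signs `(-1)^{|t|+1}`. Each of them is
separately integrable for `0 < β < 2`, with integral `|∑_{j ∈ t} ηⱼ|^β π / (Γ(1+β) sin (πβ/2))`. The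
argument applies to any number of factors that is at least two.

By scaling, the last formula reduces to `∫₀^∞ (1 - cos x) x^{-1-β} dx`. Here one writes
`Γ(1+β) x^{-1-β} = ∫₀^∞ t^β e^{-xt} dt`, exchanges the integrals, and is left with
`∫₀^∞ t^{β-1} / (1 + t²) dt`, a beta integral evaluated by Euler's reflection formula.

Absolute convergence of the product follows from `|1 - e^{ix}|² = 2 (1 - cos x)`: two factors are
controlled by the same kernels, and the remaining ones are bounded.
-/

open Set
open scoped Finset ComplexConjugate

theorem setIntegral_setIntegral_swap_of_nonneg {X Y : Type*} [MeasurableSpace X]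
    [MeasurableSpace Y] {μ : Measure X} {ν : Measure Y} [SFinite μ] [SFinite ν]
    {s : Set X} {t : Set Y} (hs : MeasurableSet s) (ht : MeasurableSet t) {F : X → Y → ℝ}
    (hF : AEStronglyMeasurable (Function.uncurry F) ((μ.restrict s).prod (ν.restrict t)))
    (hnonneg : ∀ x ∈ s, ∀ y ∈ t, 0 ≤ F x y)
    (hleft : ∀ x ∈ s, IntegrableOn (F x) t ν)
    (hright : ∀ y ∈ t, IntegrableOn (fun x => F x y) s μ) :
    ∫ x in s, ∫ y in t, F x y ∂ν ∂μ = ∫ y in t, ∫ x in s, F x y ∂μ ∂ν := by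
  by_cases h : Integrable (Function.uncurry F) ((μ.restrict s).prod (ν.restrict t))
  · exact integral_integral_swap h
  have hx : ¬IntegrableOn (fun x => ∫ y in t, F x y ∂ν) s μ := by
    refine fun hint => h ((integrable_prod_iff hF).2 ⟨ae_restrict_of_forall_mem hs hleft, ?_⟩)
    refine IntegrableOn.congr_fun hint (fun x hx => ?_) hs
    exact setIntegral_congr_fun ht fun y hy => (norm_of_nonneg (hnonneg x hx y hy)).symm
  have hy : ¬IntegrableOn (fun y => ∫ x in s, F x y ∂μ) t ν := by
    refine fun hint => h ((integrable_prod_iff' hF).2 ⟨ae_restrict_of_forall_mem ht hright, ?_⟩)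
    refine IntegrableOn.congr_fun hint (fun y hy => ?_) ht
    exact setIntegral_congr_fun hs fun x hx => (norm_of_nonneg (hnonneg x hx y hy)).symm
  rw [integral_undef hx, integral_undef hy]

theorem integrableOn_rpow_mul_exp_neg_mul_Ioi {a r : ℝ} (ha : 0 < a) (hr : 0 < r) :
    IntegrableOn (fun t => t ^ (a - 1) * exp (-(r * t))) (Ioi 0) :=
  .of_integral_ne_zero (by rw [integral_rpow_mul_exp_neg_mul_Ioi ha hr]; positivity)

theorem integral_rpow_div_one_add_rpow_add {a b : ℝ} (ha : 0 < a) (hb : 0 < b) :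
    ∫ t in Ioi (0 : ℝ), t ^ (a - 1) / (1 + t) ^ (a + b) = Gamma a * Gamma b / Gamma (a + b) := by
  have hΓ : 0 < Gamma (a + b) := Gamma_pos_of_pos (by positivity)
  let F : ℝ → ℝ → ℝ := fun t u => t ^ (a - 1) * (u ^ (a + b - 1) * exp (-((1 + t) * u)))
  have hF (t u : ℝ) :
      F t u = u ^ (a + b - 1) * exp (-(1 * u)) * (t ^ (a - 1) * exp (-(u * t))) := by
    simp only [F, show -((1 + t) * u) = -(1 * u) + -(u * t) by ring, exp_add]
    ring
  rw [eq_div_iff hΓ.ne']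
  calc (∫ t in Ioi (0 : ℝ), t ^ (a - 1) / (1 + t) ^ (a + b)) * Gamma (a + b)
      = ∫ t in Ioi 0, ∫ u in Ioi 0, F t u := by
        rw [← integral_mul_const]
        refine setIntegral_congr_fun measurableSet_Ioi fun t (ht : 0 < t) => ?_
        simp only [F]
        rw [integral_const_mul, integral_rpow_mul_exp_neg_mul_Ioi (by positivity) (by positivity),
          one_div, inv_rpow (by positivity)]
        ring
    _ = ∫ u in Ioi 0, ∫ t in Ioi 0, F t u := by
        refine setIntegral_setIntegral_swap_of_nonneg measurableSet_Ioi measurableSet_Ioi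
          (by fun_prop) (fun t (ht : 0 < t) u (hu : 0 < u) => by positivity)
          (fun t (ht : 0 < t) => ?_) (fun u (hu : 0 < u) => ?_)
        · exact (integrableOn_rpow_mul_exp_neg_mul_Ioi (by positivity) (by positivity)).const_mul _
        · simp only [hF]
          exact (integrableOn_rpow_mul_exp_neg_mul_Ioi ha hu).const_mul _
    _ = ∫ u in Ioi 0, Gamma a * (u ^ (b - 1) * exp (-(1 * u))) := by
        refine setIntegral_congr_fun measurableSet_Ioi fun u (hu : 0 < u) => ?_
        simp only [hF]
        rw [integral_const_mul, integral_rpow_mul_exp_neg_mul_Ioi ha hu, one_div, inv_rpow hu.le,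
          add_sub_assoc, rpow_add hu]
        field_simp
    _ = Gamma a * Gamma b := by
        rw [integral_const_mul, integral_rpow_mul_exp_neg_mul_Ioi hb one_pos]
        simp

theorem integral_rpow_div_one_add_rpow {p q : ℝ} (hq : 0 < q) (hqp : q < p) :
    ∫ x in Ioi (0 : ℝ), x ^ (q - 1) / (1 + x ^ p) = π / (p * sin (π * (q / p))) := by
  have hp : 0 < p := hq.trans hqp
  calc ∫ x in Ioi (0 : ℝ), x ^ (q - 1) / (1 + x ^ p)
      = ∫ x in Ioi 0, p⁻¹ * ((p * x ^ (p - 1)) • ((x ^ p) ^ (q / p - 1) / (1 + x ^ p))) := by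
        refine setIntegral_congr_fun measurableSet_Ioi fun x (hx : 0 < x) => ?_
        have hexp : x ^ (q - 1) = x ^ (p - 1) * (x ^ p) ^ (q / p - 1) := by
          rw [← rpow_mul hx.le, ← rpow_add hx]
          congr 1
          field_simp
          ring
        simp only [hexp, smul_eq_mul]
        field_simp
    _ = p⁻¹ * ∫ t in Ioi 0, t ^ (q / p - 1) / (1 + t) := by
        rw [integral_const_mul,
          integral_comp_rpow_Ioi_of_pos (g := fun t => t ^ (q / p - 1) / (1 + t)) hp]
    _ = π / (p * sin (π * (q / p))) := by
        have h := integral_rpow_div_one_add_rpow_add (a := q / p) (b := 1 - q / p) (by positivity)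
          (sub_pos.2 ((div_lt_one hp).2 hqp))
        simp only [add_sub_cancel, rpow_one, Gamma_one, div_one, Gamma_mul_Gamma_one_sub] at h
        rw [h]
        field_simp

theorem integral_one_sub_cos_mul_exp_neg_mul_Ioi {t : ℝ} (ht : 0 < t) :
    ∫ x in Ioi (0 : ℝ), (1 - cos x) * exp (-(x * t)) = 1 / (t * (1 + t ^ 2)) := by
  have hre₀ : (-t : ℂ).re < 0 := by simpa
  have hre₁ : (-t + Complex.I : ℂ).re < 0 := by simpa
  have hint₀ := integrableOn_exp_mul_complex_Ioi hre₀ 0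
  have hint₁ := integrableOn_exp_mul_complex_Ioi hre₁ 0
  calc ∫ x in Ioi (0 : ℝ), (1 - cos x) * exp (-(x * t))
      = ∫ x in Ioi (0 : ℝ),
          (Complex.exp (-t * x) - Complex.exp ((-t + Complex.I) * x)).re := by
        congr 1 with x
        simp [Complex.exp_re, sub_mul, mul_comm]
    _ = (-1 / (-t : ℂ) - -1 / (-t + Complex.I)).re := by
        refine (integral_re (hint₀.sub hint₁)).trans ?_
        rw [integral_sub' hint₀ hint₁, integral_exp_mul_complex_Ioi hre₀,
          integral_exp_mul_complex_Ioi hre₁]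
        simp
    _ = 1 / (t * (1 + t ^ 2)) := by
        simp only [Complex.sub_re, Complex.div_re, Complex.normSq_apply, Complex.neg_re,
          Complex.neg_im, Complex.add_re, Complex.add_im, Complex.ofReal_re, Complex.ofReal_im,
          Complex.I_re, Complex.I_im, Complex.one_re, Complex.one_im]
        field_simp
        ring

theorem integral_one_sub_cos_mul_rpow_Ioi {β : ℝ} (hβ₀ : 0 < β) (hβ₂ : β < 2) :
    ∫ x in Ioi (0 : ℝ), (1 - cos x) * x ^ (-1 - β)
      = π / (2 * Gamma (1 + β) * sin (π * β / 2)) := by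
  have hΓ : 0 < Gamma (1 + β) := Gamma_pos_of_pos (by positivity)
  have hcos (x : ℝ) : 0 ≤ 1 - cos x := sub_nonneg.2 (cos_le_one x)
  let F : ℝ → ℝ → ℝ := fun x t => (1 - cos x) * (t ^ (1 + β - 1) * exp (-(x * t)))
  have hF (x t : ℝ) : F x t = t ^ (1 + β - 1) * ((1 - cos x) * exp (-(x * t))) := by
    simp only [F]
    ring
  have hswap : Gamma (1 + β) * ∫ x in Ioi (0 : ℝ), (1 - cos x) * x ^ (-1 - β)
      = π / (2 * sin (π * (β / 2))) := by
    calc Gamma (1 + β) * ∫ x in Ioi (0 : ℝ), (1 - cos x) * x ^ (-1 - β)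
        = ∫ x in Ioi 0, ∫ t in Ioi 0, F x t := by
          rw [← integral_const_mul]
          refine setIntegral_congr_fun measurableSet_Ioi fun x (hx : 0 < x) => ?_
          simp only [F]
          rw [integral_const_mul, integral_rpow_mul_exp_neg_mul_Ioi (by positivity) hx, one_div,
            inv_rpow hx.le, ← rpow_neg hx.le, neg_add']
          ring
      _ = ∫ t in Ioi 0, ∫ x in Ioi 0, F x t := by
          refine setIntegral_setIntegral_swap_of_nonneg measurableSet_Ioi measurableSet_Ioi
            (by fun_prop) (fun x _ t (ht : 0 < t) => mul_nonneg (hcos x) (by positivity))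
            (fun x (hx : 0 < x) => ?_) (fun t (ht : 0 < t) => ?_)
          · exact (integrableOn_rpow_mul_exp_neg_mul_Ioi (by positivity) hx).const_mul _
          · simp only [hF]
            refine Integrable.const_mul (.of_integral_ne_zero ?_) _
            rw [integral_one_sub_cos_mul_exp_neg_mul_Ioi ht]
            positivity
      _ = ∫ t in Ioi 0, t ^ (β - 1) / (1 + t ^ (2 : ℝ)) := by
          refine setIntegral_congr_fun measurableSet_Ioi fun t (ht : 0 < t) => ?_
          simp only [hF]
          rw [integral_const_mul, integral_one_sub_cos_mul_exp_neg_mul_Ioi ht, add_sub_cancel_left,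
            rpow_sub_one ht.ne', rpow_two]
          field_simp
      _ = π / (2 * sin (π * (β / 2))) := integral_rpow_div_one_add_rpow hβ₀ hβ₂
  rw [← mul_right_inj' hΓ.ne', hswap, mul_div_assoc π]
  field_simp

theorem integral_one_sub_cos_mul_abs_rpow {β : ℝ} (hβ₀ : 0 < β) (hβ₂ : β < 2) (s : ℝ) :
    ∫ x, (1 - cos (s * x)) * |x| ^ (-1 - β)
      = π / (Gamma (1 + β) * sin (π * β / 2)) * |s| ^ β := by
  rcases eq_or_ne s 0 with rfl | hs
  · simp [zero_rpow hβ₀.ne']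
  have hs' : 0 < |s| := abs_pos.2 hs
  calc ∫ x, (1 - cos (s * x)) * |x| ^ (-1 - β)
      = ∫ x, |s| ^ (1 + β) * ((1 - cos |s * x|) * |s * x| ^ (-1 - β)) := by
        congr 1 with x
        rw [cos_abs, abs_mul, mul_rpow hs'.le (abs_nonneg x), ← neg_add', rpow_neg hs'.le]
        field_simp
    _ = |s| ^ (1 + β) * (|s⁻¹| * (2 * ∫ x in Ioi (0 : ℝ), (1 - cos x) * x ^ (-1 - β))) := by
        rw [integral_const_mul,
          Measure.integral_comp_mul_left (fun y => (1 - cos |y|) * |y| ^ (-1 - β)) s,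
          integral_comp_abs (f := fun y => (1 - cos y) * y ^ (-1 - β)), smul_eq_mul]
    _ = π / (Gamma (1 + β) * sin (π * β / 2)) * |s| ^ β := by
        rw [integral_one_sub_cos_mul_rpow_Ioi hβ₀ hβ₂, rpow_add hs', rpow_one, abs_inv]
        field_simp

theorem integrable_one_sub_cos_mul_abs_rpow {β : ℝ} (hβ₀ : 0 < β) (hβ₂ : β < 2) (s : ℝ) :
    Integrable fun x => (1 - cos (s * x)) * |x| ^ (-1 - β) := by
  rcases eq_or_ne s 0 with rfl | hs
  · simp
  have hsin : 0 < sin (π * β / 2) :=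
    sin_pos_of_pos_of_lt_pi (by positivity) (by nlinarith [pi_pos])
  refine .of_integral_ne_zero ?_
  rw [integral_one_sub_cos_mul_abs_rpow hβ₀ hβ₂]
  positivity

theorem norm_one_sub_exp_I_mul_ofReal_sq (x : ℝ) :
    ‖1 - Complex.exp (Complex.I * x)‖ ^ 2 = 2 * (1 - cos x) := by
  rw [norm_sub_rev, Complex.norm_exp_I_mul_ofReal_sub_one, norm_eq_abs, sq_abs, mul_pow,
    sin_sq_eq_half_sub, mul_div_cancel₀ x two_ne_zero]
  ring

theorem norm_one_sub_exp_I_mul_ofReal_le_two (x : ℝ) : ‖1 - Complex.exp (Complex.I * x)‖ ≤ 2 := by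
  calc ‖1 - Complex.exp (Complex.I * x)‖ ≤ ‖(1 : ℂ)‖ + ‖Complex.exp (Complex.I * x)‖ :=
        norm_sub_le _ _
    _ = 2 := by rw [Complex.norm_exp_I_mul_ofReal, norm_one, one_add_one_eq_two]

theorem re_prod_one_sub_exp_I_mul_ofReal {ι : Type*} {s : Finset ι} (hs : s.Nonempty)
    (θ : ι → ℝ) :
    (∏ j ∈ s, (1 - Complex.exp (Complex.I * θ j))).re
      = ∑ t ∈ s.powerset, (-1) ^ (#t + 1) * (1 - cos (∑ j ∈ t, θ j)) := by
  classical
  have hexp (t : Finset ι) : ((-1) ^ #t * ∏ j ∈ t, Complex.exp (Complex.I * θ j)).re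
      = (-1) ^ #t * cos (∑ j ∈ t, θ j) := by
    rw [← Complex.exp_sum, ← Finset.mul_sum, ← Complex.ofReal_sum, mul_comm Complex.I,
      ← Complex.exp_ofReal_mul_I_re]
    exact_mod_cast Complex.re_ofReal_mul ((-1) ^ #t) _
  have hcancel : ∑ t ∈ s.powerset, (-1 : ℝ) ^ #t = 0 := by
    exact_mod_cast Finset.sum_powerset_neg_one_pow_card_of_nonempty hs
  calc (∏ j ∈ s, (1 - Complex.exp (Complex.I * θ j))).re
      = ∑ t ∈ s.powerset, (-1) ^ #t * cos (∑ j ∈ t, θ j) := by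
        simp only [Finset.prod_sub, Finset.prod_const_one, mul_one, Complex.re_sum, hexp]
    _ = ∑ t ∈ s.powerset, (-1) ^ #t * cos (∑ j ∈ t, θ j)
          - ∑ t ∈ s.powerset, (-1 : ℝ) ^ #t := by rw [hcancel, sub_zero]
    _ = ∑ t ∈ s.powerset, (-1) ^ (#t + 1) * (1 - cos (∑ j ∈ t, θ j)) := by
        rw [← Finset.sum_sub_distrib]
        exact Finset.sum_congr rfl fun t _ => by ring

theorem integral_eq_ofReal_integral_re_of_neg_eq_conj {f : ℝ → ℂ} (hf : Integrable f)
    (hconj : ∀ x, f (-x) = conj (f x)) : ∫ x, f x = ((∫ x, (f x).re : ℝ) : ℂ) := by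
  have hreal : conj (∫ x, f x) = ∫ x, f x := by
    rw [← integral_conj, ← integral_neg_eq_self f]
    simp only [hconj]
  rw [← Complex.conj_eq_iff_re.1 hreal]
  exact congrArg _ (integral_re hf).symm

theorem integrable_one_sub_exp_mul_one_sub_exp_mul_abs_rpow {β : ℝ} (hβ₀ : 0 < β) (hβ₂ : β < 2)
    (a b : ℝ) :
    Integrable fun x : ℝ =>
      (1 - Complex.exp (Complex.I * (a * x : ℝ))) * (1 - Complex.exp (Complex.I * (b * x : ℝ)))
        * ((|x| ^ (-1 - β) : ℝ) : ℂ) := by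
  refine ((integrable_one_sub_cos_mul_abs_rpow hβ₀ hβ₂ a).add
    (integrable_one_sub_cos_mul_abs_rpow hβ₀ hβ₂ b)).mono'
      (Measurable.aestronglyMeasurable (by fun_prop)) (ae_of_all _ fun x => ?_)
  have hw : 0 ≤ |x| ^ (-1 - β) := by positivity
  rw [norm_mul, norm_mul, Complex.norm_of_nonneg hw, Pi.add_apply, ← add_mul]
  gcongr
  linarith [norm_one_sub_exp_I_mul_ofReal_sq (a * x), norm_one_sub_exp_I_mul_ofReal_sq (b * x),
    two_mul_le_add_sq ‖1 - Complex.exp (Complex.I * (a * x : ℝ))‖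
      ‖1 - Complex.exp (Complex.I * (b * x : ℝ))‖]

section ProdOneSubExp

variable {ι : Type*} {s : Finset ι} {β : ℝ}

theorem integrable_prod_one_sub_exp_mul_abs_rpow (hs : 1 < #s) (hβ₀ : 0 < β) (hβ₂ : β < 2)
    (η : ι → ℝ) :
    Integrable fun x : ℝ =>
      (∏ j ∈ s, (1 - Complex.exp (Complex.I * (η j * x : ℝ)))) * ((|x| ^ (-1 - β) : ℝ) : ℂ) := by
  classical
  obtain ⟨i, hi, k, hk, hik⟩ := Finset.one_lt_card.1 hs
  let r := (s.erase i).erase k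
  have hbound (x : ℝ) : ‖∏ j ∈ r, (1 - Complex.exp (Complex.I * (η j * x : ℝ)))‖ ≤ 2 ^ #r := by
    rw [norm_prod]
    exact (Finset.prod_le_prod (fun _ _ => norm_nonneg _) fun _ _ =>
      norm_one_sub_exp_I_mul_ofReal_le_two _).trans_eq (Finset.prod_const 2)
  refine ((integrable_one_sub_exp_mul_one_sub_exp_mul_abs_rpow hβ₀ hβ₂ (η i) (η k)).bdd_mul
    (Measurable.aestronglyMeasurable (by fun_prop)) (ae_of_all _ hbound)).congr
      (ae_of_all _ fun x => ?_)
  simp only [r]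
  rw [← Finset.mul_prod_erase s _ hi, ← Finset.mul_prod_erase (s.erase i) _
    (Finset.mem_erase.2 ⟨hik.symm, hk⟩)]
  ring

theorem integral_prod_one_sub_exp_mul_abs_rpow (hs : 1 < #s) (hβ₀ : 0 < β) (hβ₂ : β < 2)
    (η : ι → ℝ) :
    ∫ x : ℝ,
        (∏ j ∈ s, (1 - Complex.exp (Complex.I * (η j * x : ℝ)))) * ((|x| ^ (-1 - β) : ℝ) : ℂ)
      = ((π / (Gamma (1 + β) * sin (π * β / 2))
          * ∑ t ∈ s.powerset, (-1) ^ (#t + 1) * |∑ j ∈ t, η j| ^ β : ℝ) : ℂ) := by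
  have hne : s.Nonempty := Finset.card_pos.1 (zero_lt_one.trans hs)
  have hre (x : ℝ) :
      ((∏ j ∈ s, (1 - Complex.exp (Complex.I * (η j * x : ℝ)))) * ((|x| ^ (-1 - β) : ℝ) : ℂ)).re
        = ∑ t ∈ s.powerset,
            (-1) ^ (#t + 1) * ((1 - cos ((∑ j ∈ t, η j) * x)) * |x| ^ (-1 - β)) := by
    rw [Complex.re_mul_ofReal, re_prod_one_sub_exp_I_mul_ofReal hne, Finset.sum_mul]
    simp only [Finset.sum_mul, mul_assoc]
  rw [integral_eq_ofReal_integral_re_of_neg_eq_conj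
    (integrable_prod_one_sub_exp_mul_abs_rpow hs hβ₀ hβ₂ η)
    fun x => by simp [map_prod, ← Complex.exp_conj]]
  congr 1
  simp only [hre]
  rw [integral_finsetSum _ fun t _ =>
    (integrable_one_sub_cos_mul_abs_rpow hβ₀ hβ₂ (∑ j ∈ t, η j)).const_mul _, Finset.mul_sum]
  refine Finset.sum_congr rfl fun t _ => ?_
  rw [integral_const_mul, integral_one_sub_cos_mul_abs_rpow hβ₀ hβ₂]
  ring

end ProdOneSubExp

theorem sum_powerset_univ_fin_three_neg_one_pow_mul {M R : Type*} [AddCommMonoid M] [Ring R]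
    (f : M → R) (η : Fin 3 → M) :
    ∑ t ∈ (Finset.univ : Finset (Fin 3)).powerset, (-1) ^ (#t + 1) * f (∑ j ∈ t, η j)
      = f (η 0) + f (η 1) + f (η 2) + f (η 0 + η 1 + η 2)
        - f (η 0 + η 1) - f (η 0 + η 2) - f (η 1 + η 2) - f 0 := by
  rw [show (Finset.univ : Finset (Fin 3)).powerset
    = {∅, {0}, {1}, {2}, {0, 1}, {0, 2}, {1, 2}, {0, 1, 2}} by decide]
  simp +decide [pow_succ, add_assoc]
  abel

theorem abs_rpow_mul_sign_div_cube {p : ℝ} (hp : p ≠ 3) (x : ℝ) :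
    |x| ^ p * Real.sign x / x ^ 3 = |x| ^ (p - 3) := by
  rcases lt_trichotomy x 0 with hx | rfl | hx
  · have hpow := rpow_sub_natCast (neg_ne_zero.2 hx.ne) p 3
    rw [Nat.cast_ofNat] at hpow
    rw [sign_of_neg hx, abs_of_neg hx, hpow]
    field_simp
  · -- Both sides vanish, the left one because `0 / 0 = 0`.
    simp [zero_rpow (sub_ne_zero.2 hp)]
  · have hpow := rpow_sub_natCast hx.ne' p 3
    rw [Nat.cast_ofNat] at hpow
    rw [sign_of_pos hx, abs_of_pos hx, hpow, mul_one]

theorem pi_div_Gamma_mul_sin_eq {α : ℝ} (hα : sin (π * α) ≠ 0) :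
    π / (Gamma (1 + (3 - α)) * sin (π * (3 - α) / 2))
      = 2 * sin (π * α / 2) * Gamma (α - 1) / ((2 - α) * (3 - α)) := by
  have hα₂ : 2 - α ≠ 0 := by
    intro h
    exact hα (by rw [show π * α = 2 * π by linear_combination -π * h, sin_two_pi])
  have hα₃ : 3 - α ≠ 0 := by
    intro h
    exact hα (by rw [show π * α = π + 2 * π by linear_combination -π * h, sin_add_two_pi, sin_pi])
  have hdouble : sin (π * α) = 2 * sin (π * α / 2) * cos (π * α / 2) := by
    rw [← sin_two_mul, mul_div_cancel₀ _ two_ne_zero]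
  have hreflect : Gamma (α - 3) * Gamma (1 + (3 - α)) = π / -sin (π * α) := by
    rw [show 1 + (3 - α) = 1 - (α - 3) by ring, Gamma_mul_Gamma_one_sub, ← sin_sub_pi,
      ← sin_sub_two_pi (π * α - π)]
    ring_nf
  have hΓ : Gamma (1 + (3 - α)) ≠ 0 :=
    right_ne_zero_of_mul (hreflect ▸ div_ne_zero pi_ne_zero (neg_ne_zero.2 hα))
  have hrec : Gamma (α - 1) = (2 - α) * (3 - α) * Gamma (α - 3) := by
    rw [show α - 1 = α - 3 + 1 + 1 by ring, Gamma_add_one (by grind), Gamma_add_one (by grind)]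
    ring
  have hshift : sin (π * (3 - α) / 2) = -cos (π * α / 2) := by
    rw [show π * (3 - α) / 2 = π / 2 - π * α / 2 + π by ring, sin_add_pi, sin_pi_div_two_sub]
  rw [hdouble] at hα hreflect
  have hcos : cos (π * α / 2) ≠ 0 := right_ne_zero_of_mul hα
  have hsin : sin (π * α / 2) ≠ 0 := right_ne_zero_of_mul (left_ne_zero_of_mul hα)
  rw [hshift, hrec, eq_div_of_mul_eq hΓ hreflect]
  field_simp

theorem T1_closed_form_general (α : ℝ) (hα1 : 1 < α) (hα3 : α < 3) (hα2 : α ≠ 2)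
    (η₁ η₂ η₃ : ℝ) :
    Integrable
      (fun ζ : ℝ =>
        (1 - Complex.exp (Complex.I * η₁ * ζ)) * (1 - Complex.exp (Complex.I * η₂ * ζ))
          * (1 - Complex.exp (Complex.I * η₃ * ζ))
          * ((|ζ| ^ (α - 1) * Real.sign ζ / ζ ^ 3 : ℝ) : ℂ)) volume ∧
    (∫ ζ : ℝ,
        (1 - Complex.exp (Complex.I * η₁ * ζ)) * (1 - Complex.exp (Complex.I * η₂ * ζ))
          * (1 - Complex.exp (Complex.I * η₃ * ζ))
          * ((|ζ| ^ (α - 1) * Real.sign ζ / ζ ^ 3 : ℝ) : ℂ))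
      = (((2 * Real.sin (π * α / 2) * Real.Gamma (α - 1)) / ((2 - α) * (3 - α))
          * (|η₁| ^ (3 - α) + |η₂| ^ (3 - α) + |η₃| ^ (3 - α) + |η₁ + η₂ + η₃| ^ (3 - α)
              - |η₁ + η₂| ^ (3 - α) - |η₁ + η₃| ^ (3 - α) - |η₂ + η₃| ^ (3 - α)) : ℝ) : ℂ) := by
  have hβ₀ : 0 < 3 - α := by linarith
  have hβ₂ : 3 - α < 2 := by linarith
  have hcard : 1 < #(Finset.univ : Finset (Fin 3)) := by simp
  have hsin : sin (π * α) ≠ 0 := by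
    rw [← sin_sub_two_pi, Ne, sin_eq_zero_iff_of_lt_of_lt (by nlinarith [pi_pos])
      (by nlinarith [pi_pos])]
    grind [pi_ne_zero]
  have hweight (ζ : ℝ) : |ζ| ^ (α - 1) * Real.sign ζ / ζ ^ 3 = |ζ| ^ (-1 - (3 - α)) := by
    rw [abs_rpow_mul_sign_div_cube (by linarith)]
    ring_nf
  have hint := integrable_prod_one_sub_exp_mul_abs_rpow hcard hβ₀ hβ₂ ![η₁, η₂, η₃]
  have hval := integral_prod_one_sub_exp_mul_abs_rpow hcard hβ₀ hβ₂ ![η₁, η₂, η₃]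
  rw [sum_powerset_univ_fin_three_neg_one_pow_mul fun y : ℝ => |y| ^ (3 - α),
    pi_div_Gamma_mul_sin_eq hsin, abs_zero, zero_rpow hβ₀.ne', sub_zero] at hval
  simp only [hweight]
  simpa only [Fin.prod_univ_three, Matrix.cons_val, Complex.ofReal_mul, ← mul_assoc] using
    And.intro hint hval

/-- For `1 < α < 2` and `A = 2 sin(πα/2) Γ(α-1)`, the absolutely convergent integral
`T₁(η₁,η₂,η₃) = ∫ (1-e^{iη₁ζ})(1-e^{iη₂ζ})(1-e^{iη₃ζ}) ζ^{-3} |ζ|^{α-1} sgn ζ dζ`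
equals `(A/((2-α)(3-α))) (|η₁|^{3-α} + |η₂|^{3-α} + |η₃|^{3-α} + |η₁+η₂+η₃|^{3-α}
  - |η₁+η₂|^{3-α} - |η₁+η₃|^{3-α} - |η₂+η₃|^{3-α})`. -/
theorem T1_closed_form (α : ℝ) (hα1 : 1 < α) (hα2 : α < 2) (η₁ η₂ η₃ : ℝ) :
    Integrable
      (fun ζ : ℝ =>
        (1 - Complex.exp (Complex.I * η₁ * ζ)) * (1 - Complex.exp (Complex.I * η₂ * ζ))
          * (1 - Complex.exp (Complex.I * η₃ * ζ))
          * ((|ζ| ^ (α - 1) * Real.sign ζ / ζ ^ 3 : ℝ) : ℂ)) volume ∧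
    (∫ ζ : ℝ,
        (1 - Complex.exp (Complex.I * η₁ * ζ)) * (1 - Complex.exp (Complex.I * η₂ * ζ))
          * (1 - Complex.exp (Complex.I * η₃ * ζ))
          * ((|ζ| ^ (α - 1) * Real.sign ζ / ζ ^ 3 : ℝ) : ℂ))
      = (((2 * Real.sin (π * α / 2) * Real.Gamma (α - 1)) / ((2 - α) * (3 - α))
          * (|η₁| ^ (3 - α) + |η₂| ^ (3 - α) + |η₃| ^ (3 - α) + |η₁ + η₂ + η₃| ^ (3 - α)
              - |η₁ + η₂| ^ (3 - α) - |η₁ + η₃| ^ (3 - α) - |η₂ + η₃| ^ (3 - α)) : ℝ) : ℂ) :=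
  T1_closed_form_general α hα1 (by linarith) hα2.ne η₁ η₂ η₃
end
end
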